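/- Let g_i : ℝ² → [0,1], 1 ≤ i ≤ I, be C^r functions with supp(g_i) ⊂ Q and Σ_{i=1}^I g_i(x) ≤ 1 for all x ∈ Q, and let Θ and Θ' be polarizations with Θ' < Θ. Then (Σ_{i=1}^I ‖g_i·u‖²_{Θ'})^{1/2} ≤ C₀·‖u‖_Θ + C·|u|_Θ for all u ∈ C^r(R), where C₀ is a constant not depending on the family {g_i} while C may depend on it. If moreover Σ_{i=1}^I g_i(x) = 1 for all x ∈ R, then also ‖u‖_{Θ'} ≤ ν·(Σ_{i=1}^I ‖g_i·u‖²_Θ)^{1/2} + C·Σ_{i=1}^I |g_i·u|_Θ for all u ∈ C^r(R), where ν is the intersection multiplicity of the supports of the functions g_i. -/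

import Mathlib

noncomputable section
open MeasureTheory Filter Finset Function Set Real Topology
open scoped ENNReal NNReal

namespace AngleMult

/-! ### Anisotropic Sobolev norms on `ℝ²` -/

/-- Euclidean magnitude on `ℝ × ℝ`. -/
def en (v : ℝ × ℝ) : ℝ := Real.sqrt (v.1 ^ 2 + v.2 ^ 2)

/-- Fourier transform on `ℝ²`. -/
def FT (u : ℝ × ℝ → ℂ) (ξ : ℝ × ℝ) : ℂ :=
  ∫ x : ℝ × ℝ, Complex.exp (-(2 * Real.pi * (x.1 * ξ.1 + x.2 * ξ.2)) * Complex.I) * u x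

/-- Inverse Fourier transform on `ℝ²`. -/
def invFT (u : ℝ × ℝ → ℂ) (x : ℝ × ℝ) : ℂ :=
  ∫ ξ : ℝ × ℝ, Complex.exp ((2 * Real.pi * (x.1 * ξ.1 + x.2 * ξ.2)) * Complex.I) * u ξ

/-- The rectangle `R = (-η,η) × (δ,2δ)`. -/
def Rset (η δ : ℝ) : Set (ℝ × ℝ) := Set.Ioo (-η) η ×ˢ Set.Ioo δ (2 * δ)

/-- The rectangle `Q = (-2η,2η) × (0,3δ)`. -/
def Qset (η δ : ℝ) : Set (ℝ × ℝ) := Set.Ioo (-(2 * η)) (2 * η) ×ˢ Set.Ioo 0 (3 * δ)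

/-- `C ⋐ C'`: the closure of `C` is contained in the interior of `C'` except for the
origin. -/
def Csub (C C' : Set (ℝ × ℝ)) : Prop := closure C \ {0} ⊆ interior C'

/-- A polarization `Θ = (C₊, C₋, φ₊, φ₋)`: a pair of closed cones intersecting only at `0`
together with smooth functions on the unit circle (encoded as positively homogeneous
functions of degree `0` on `ℝ² ∖ {0}`) adapted to them. -/
structure Polarization where
  Cp : Set (ℝ × ℝ)
  Cm : Set (ℝ × ℝ)
  phip : ℝ × ℝ → ℝ
  phim : ℝ × ℝ → ℝ
  closed_p : IsClosed Cp
  closed_m : IsClosed Cm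
  cone_p : ∀ (c : ℝ) v, v ∈ Cp → c • v ∈ Cp
  cone_m : ∀ (c : ℝ) v, v ∈ Cm → c • v ∈ Cm
  inter_eq : Cp ∩ Cm = {0}
  smooth_p : ContDiffOn ℝ (⊤ : ℕ∞) phip {v : ℝ × ℝ | v ≠ 0}
  smooth_m : ContDiffOn ℝ (⊤ : ℕ∞) phim {v : ℝ × ℝ | v ≠ 0}
  homog_p : ∀ c : ℝ, 0 < c → ∀ v, phip (c • v) = phip v
  mem_Icc_p : ∀ v, phip v ∈ Set.Icc (0 : ℝ) 1
  one_on_p : ∀ v ∈ Cp, v ≠ 0 → phip v = 1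
  zero_on_m : ∀ v ∈ Cm, v ≠ 0 → phip v = 0
  phim_def : ∀ v, phim v = 1 - phip v

/-- The order `Θ < Θ'` on polarizations: `ℝ² ∖ C'₊ ⋐ C₋`. -/
def PolLt (Θ Θ' : Polarization) : Prop := Csub (Set.univ \ Θ'.Cp) Θ.Cm

/-- Admissibility of the fixed bump function `χ`. -/
def ChiOK (χ : ℝ → ℝ) : Prop :=
  ContDiff ℝ (⊤ : ℕ∞) χ ∧ (∀ s ≤ (1 : ℝ), χ s = 1) ∧ (∀ s, (2 : ℝ) ≤ s → χ s = 0) ∧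
    ∀ s, χ s ∈ Set.Icc (0 : ℝ) 1

/-- The Littlewood-Paley functions `ψ_{Θ,n,σ}` (`σ = true` is `+`, `σ = false` is `-`). -/
def psiLP (χ : ℝ → ℝ) (Θ : Polarization) (n : ℕ) (σ : Bool) (ξ : ℝ × ℝ) : ℝ :=
  if n = 0 then χ (en ξ) / 2
  else (if σ then Θ.phip ξ else Θ.phim ξ) *
    (χ ((2 : ℝ) ^ (-(n : ℤ)) * en ξ) - χ ((2 : ℝ) ^ (-(n : ℤ) + 1) * en ξ))

/-- The pseudo-differential operator `ψ_{Θ,n,σ}(D) u = 𝓕⁻¹(ψ_{Θ,n,σ} · 𝓕u)`. -/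
def psiD (χ : ℝ → ℝ) (Θ : Polarization) (n : ℕ) (σ : Bool) (u : ℝ × ℝ → ℂ) :
    ℝ × ℝ → ℂ :=
  invFT fun ξ => (psiLP χ Θ n σ ξ : ℂ) * FT u ξ

/-- The partial norm `‖u‖^σ_{Θ,p} = (∑_n 2^{2pn} ‖ψ_{Θ,n,σ}·𝓕u‖²_{L²})^{1/2}`
(`ℝ≥0∞`-valued). -/
def segNorm (χ : ℝ → ℝ) (Θ : Polarization) (p : ℝ) (σ : Bool) (u : ℝ × ℝ → ℂ) : ℝ≥0∞ :=
  (∑' n : ℕ, ENNReal.ofReal ((2 : ℝ) ^ (2 * p * (n : ℝ))) *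
      (eLpNorm (fun ξ => (psiLP χ Θ n σ ξ : ℂ) * FT u ξ) 2 volume) ^ 2) ^ (1 / 2 : ℝ)

/-- The anisotropic Sobolev norm `‖u‖_{Θ,p,q}`. -/
def anorm (χ : ℝ → ℝ) (Θ : Polarization) (p q : ℝ) (u : ℝ × ℝ → ℂ) : ℝ≥0∞ :=
  ((segNorm χ Θ p true u) ^ 2 + (segNorm χ Θ q false u) ^ 2) ^ (1 / 2 : ℝ)

/-- The (usual) Sobolev norm of order `s` of `u`, via the Fourier transform. -/
def wnorm (s : ℝ) (u : ℝ × ℝ → ℂ) : ℝ≥0∞ :=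
  eLpNorm (fun ξ => ((1 + en ξ ^ 2) ^ (s / 2) : ℝ) * FT u ξ) 2 volume

/-- `u ∈ C^r(R)`: a `C^r` function supported in `R`. -/
def CrSupp (r : ℕ) (η δ : ℝ) (u : ℝ × ℝ → ℂ) : Prop :=
  ContDiff ℝ r u ∧ Function.support u ⊆ Rset η δ

/-- `u ∈ C^∞(R)`: a `C^∞` function supported in `R`. -/
def SmoothSupp (η δ : ℝ) (u : ℝ × ℝ → ℂ) : Prop :=
  ContDiff ℝ (⊤ : ℕ∞) u ∧ Function.support u ⊆ Rset η δ

open FourierTransform SchwartzMap in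
lemma planch_V {V : Type*} [NormedAddCommGroup V] [InnerProductSpace ℝ V] [FiniteDimensional ℝ V]
    [MeasurableSpace V] [BorelSpace V] (f : V → ℂ) (h1 : Integrable f) (h2 : MemLp f 2) :
    eLpNorm (𝓕 f) 2 volume = eLpNorm f 2 volume := by
  have hcont : Continuous (𝓕 f) := VectorFourier.fourierIntegral_continuous
    Real.continuous_fourierChar (by exact continuous_inner) h1
  have key : (𝓕 f) =ᵐ[volume] ((𝓕 (h2.toLp f) : Lp (α := V) ℂ 2 volume) : V → ℂ) := by
    apply ae_eq_of_integral_contDiff_smul_eq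
    · exact hcont.locallyIntegrable
    · exact (Lp.memLp _).locallyIntegrable (by norm_num)
    intro g hg hgc
    have hgC : ContDiff ℝ (⊤ : ℕ∞) (fun x => (g x : ℂ)) := Complex.ofRealCLM.contDiff.comp hg
    have hgcC : HasCompactSupport (fun x => (g x : ℂ)) := hgc.comp_left (g := fun t : ℝ => (t : ℂ)) (by simp)
    let G : 𝓢(V, ℂ) := hgcC.toSchwartzMap hgC
    have hG : ∀ x, G x = (g x : ℂ) := fun x => rfl
    have e1 := congrArg (fun T => T G) (Lp.fourier_toTemperedDistribution_eq (h2.toLp f))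
    simp only [TemperedDistribution.fourier_apply, Lp.toTemperedDistribution_apply] at e1
    have e2 : ∫ x, (𝓕 G) x • (h2.toLp f) x = ∫ x, (𝓕 G) x • f x := by
      apply integral_congr_ae
      filter_upwards [h2.coeFn_toLp] with x hx
      rw [hx]
    have e3 : ∫ x, (𝓕 G) x • f x = ∫ x, G x • 𝓕 f x := by
      have := VectorFourier.integral_fourierIntegral_smul_eq_flip (μ := (volume : Measure V)) (ν := (volume : Measure V)) (L := (innerₗ V))
        (f := (G : V → ℂ)) (g := f) Real.continuous_fourierChar (by exact continuous_inner) G.integrable h1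
      rw [flip_innerₗ] at this
      exact this
    calc _ = ∫ x, G x • 𝓕 f x := by
          apply integral_congr_ae; filter_upwards with x; simp [hG]
      _ = _ := by rw [← e3, ← e2, e1]
      _ = _ := by apply integral_congr_ae; filter_upwards with x; simp [hG]
  rw [eLpNorm_congr_ae key, ← Lp.enorm_def, ← eLpNorm_congr_ae h2.coeFn_toLp, ← Lp.enorm_def,
    ← ofReal_norm, ← ofReal_norm, Lp.norm_fourier_eq]

open FourierTransform in
lemma FT_eq (u : ℝ × ℝ → ℂ) (ξ : ℝ × ℝ) :
    FT u ξ = 𝓕 (fun x : WithLp 2 (ℝ × ℝ) => u (WithLp.ofLp x)) (WithLp.toLp 2 ξ) := by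
  rw [Real.fourier_eq']
  rw [FT, ← (WithLp.volume_preserving_ofLp ℝ ℝ).integral_comp
    (MeasurableEquiv.toLp 2 (ℝ × ℝ)).symm.measurableEmbedding]
  congr 1; ext x
  simp [WithLp.prod_inner_apply]
  left
  congr 1
  ring_nf

lemma invFT_eq (u : ℝ × ℝ → ℂ) (x : ℝ × ℝ) : invFT u x = FT u (-x) := by
  simp only [invFT, FT]
  congr 1; ext y
  congr 2
  push_cast [Prod.fst_neg, Prod.snd_neg]
  ring

lemma memLp_toLp {u : ℝ × ℝ → ℂ} {p : ℝ≥0∞} (h : MemLp u p) :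
    MemLp (fun x : WithLp 2 (ℝ × ℝ) => u (WithLp.ofLp x)) p :=
  h.comp_measurePreserving (WithLp.volume_preserving_ofLp ℝ ℝ)

lemma FT_cont {u : ℝ × ℝ → ℂ} (h : Integrable u) : Continuous (FT u) := by
  have h1 := memLp_one_iff_integrable.1 (memLp_toLp (memLp_one_iff_integrable.2 h))
  have : Continuous (FourierTransform.fourier (fun x : WithLp 2 (ℝ × ℝ) => u (WithLp.ofLp x))) := VectorFourier.fourierIntegral_continuous
    Real.continuous_fourierChar (by exact continuous_inner) h1
  have h2 : FT u = (FourierTransform.fourier (fun x : WithLp 2 (ℝ × ℝ) => u (WithLp.ofLp x))) ∘ (WithLp.toLp 2) := by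
    ext ξ; exact FT_eq u ξ
  rw [h2]
  exact this.comp (WithLp.prod_continuous_toLp 2 ℝ ℝ)

lemma invFT_cont {u : ℝ × ℝ → ℂ} (h : Integrable u) : Continuous (invFT u) := by
  have : invFT u = fun x => FT u (-x) := by ext x; exact invFT_eq u x
  rw [this]; exact (FT_cont h).comp continuous_neg

lemma FT_planch {u : ℝ × ℝ → ℂ} (h1 : Integrable u) (h2 : MemLp u 2) :
    eLpNorm (FT u) 2 volume = eLpNorm u 2 volume := by
  have h1' := memLp_one_iff_integrable.1 (memLp_toLp (memLp_one_iff_integrable.2 h1))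
  have h2' := memLp_toLp h2
  have := planch_V _ h1' h2'
  have e2 : FT u = (FourierTransform.fourier (fun x : WithLp 2 (ℝ × ℝ) => u (WithLp.ofLp x))) ∘ (WithLp.toLp 2) := by
    ext ξ; exact FT_eq u ξ
  have hc : Continuous (FourierTransform.fourier (fun x : WithLp 2 (ℝ × ℝ) => u (WithLp.ofLp x))) := VectorFourier.fourierIntegral_continuous
    Real.continuous_fourierChar (by exact continuous_inner) h1'
  rw [e2, eLpNorm_comp_measurePreserving hc.aestronglyMeasurable (WithLp.volume_preserving_toLp ℝ ℝ), this]
  exact eLpNorm_comp_measurePreserving h2.1 (WithLp.volume_preserving_ofLp ℝ ℝ)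

lemma invFT_planch {u : ℝ × ℝ → ℂ} (h1 : Integrable u) (h2 : MemLp u 2) :
    eLpNorm (invFT u) 2 volume = eLpNorm u 2 volume := by
  have : invFT u = FT u ∘ (fun x => -x) := by ext x; exact invFT_eq u x
  rw [this, eLpNorm_comp_measurePreserving (FT_cont h1).aestronglyMeasurable
    (Measure.measurePreserving_neg volume), FT_planch h1 h2]

lemma FT_inversion {u : ℝ × ℝ → ℂ} (hc : Continuous u) (h1 : Integrable u) (h2 : Integrable (FT u)) (x : ℝ × ℝ) :
    invFT (FT u) x = u x := by
  have h1' := memLp_one_iff_integrable.1 (memLp_toLp (memLp_one_iff_integrable.2 h1))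
  have e2 : (fun ξ : WithLp 2 (ℝ × ℝ) => FT u (WithLp.ofLp ξ)) = (FourierTransform.fourier (fun x : WithLp 2 (ℝ × ℝ) => u (WithLp.ofLp x))) := by
    ext ξ; exact FT_eq u _
  have h2' := memLp_one_iff_integrable.1 (memLp_toLp (memLp_one_iff_integrable.2 h2))
  rw [e2] at h2'
  have hc' : Continuous (fun x : WithLp 2 (ℝ × ℝ) => u (WithLp.ofLp x)) := hc.comp (WithLp.prod_continuous_ofLp 2 ℝ ℝ)
  have := congrFun (hc'.fourierInv_fourier_eq h1' h2') (WithLp.toLp 2 x)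
  rw [Real.fourierInv_eq_fourier_neg, ← e2] at this
  rw [invFT_eq, FT_eq]
  exact this

/-- convolution theorem -/
lemma FT_mul_invFT {g f : ℝ × ℝ → ℂ} (hg : Integrable g) (hf : Integrable f) (ξ : ℝ × ℝ) :
    FT (fun x => g x * invFT f x) ξ = ∫ ζ, FT g (ξ - ζ) * f ζ := by
  simp only [FT, invFT]
  simp_rw [← integral_const_mul, ← integral_mul_const]
  rw [integral_integral_swap]
  · congr 1; ext ζ; congr 1; ext x
    have : Complex.exp (-(2 * Real.pi * (x.1 * (ξ - ζ).1 + x.2 * (ξ - ζ).2)) * Complex.I)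
      = Complex.exp (-(2 * Real.pi * (x.1 * ξ.1 + x.2 * ξ.2)) * Complex.I) * Complex.exp ((2 * Real.pi * (x.1 * ζ.1 + x.2 * ζ.2)) * Complex.I) := by
      rw [← Complex.exp_add]; congr 1; simp only [Prod.fst_sub, Prod.snd_sub]; push_cast; ring
    have h2 := this
    rw [h2]; ring
  · have := hg.mul_prod hf
    refine Integrable.mono this ?_ ?_
    · apply AEStronglyMeasurable.mul
      · apply Continuous.aestronglyMeasurable; fun_prop
      · apply AEStronglyMeasurable.mul
        · exact hg.1.comp_fst
        · apply AEStronglyMeasurable.mul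
          · apply Continuous.aestronglyMeasurable; fun_prop
          · exact hf.1.comp_snd
    · filter_upwards with p
      simp only [Function.uncurry, norm_mul]
      have a1 : ∀ t : ℝ, ‖Complex.exp (t * Complex.I)‖ = 1 := Complex.norm_exp_ofReal_mul_I
      have := a1 (-(2 * Real.pi * (p.1.1 * ξ.1 + p.1.2 * ξ.2)))
      have h' := a1 ((2 * Real.pi * (p.1.1 * p.2.1 + p.1.2 * p.2.2)))
      push_cast at this h'
      rw [this, h']; simp


lemma lint_CS {α : Type*} [MeasurableSpace α] (μ : Measure α) (k f : α → ℝ≥0∞) (hk : AEMeasurable k μ) (hf : AEMeasurable f μ) :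
    (∫⁻ x, k x * f x ∂μ) ^ 2 ≤ (∫⁻ x, k x ∂μ) * ∫⁻ x, k x * f x ^ 2 ∂μ := by
  have h := ENNReal.lintegral_mul_le_Lp_mul_Lq μ Real.HolderConjugate.two_two
    (f := fun x => k x ^ (1/2 : ℝ)) (g := fun x => k x ^ (1/2:ℝ) * f x) (hk.pow_const _) ((hk.pow_const _).mul hf)
  have e : ∀ y : ℝ≥0∞, y ^ (1/2:ℝ) * y ^ (1/2:ℝ) = y := by
    intro y; rw [← ENNReal.rpow_add_of_nonneg _ _ (by norm_num) (by norm_num)]; norm_num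
  have e2 : ∀ y : ℝ≥0∞, (y ^ (1/2:ℝ)) ^ (2:ℝ) = y := by
    intro y; rw [← ENNReal.rpow_mul]; norm_num
  have e2' : ∀ y : ℝ≥0∞, (y ^ (1/2:ℝ)) ^ 2 = y := by
    intro y; rw [sq, e]
  have e3 : ∀ x, ((fun x => k x ^ (1/2 : ℝ)) * (fun x => k x ^ (1/2:ℝ) * f x)) x = k x * f x := by
    intro x; simp only [Pi.mul_apply]; rw [← mul_assoc, e]
  simp only [e3, ENNReal.mul_rpow_of_nonneg _ _ (by norm_num : (0:ℝ) ≤ 2), e2] at h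
  calc _ ≤ ((∫⁻ x, k x ∂μ) ^ (1/2:ℝ) * (∫⁻ x, k x * f x ^ (2:ℝ) ∂μ) ^ (1/2:ℝ)) ^ 2 := by gcongr
    _ = _ := by rw [mul_pow, e2', e2']; simp

lemma young (K f : ℝ × ℝ → ℝ≥0∞) (hK : Measurable K) (hf : Measurable f) :
    ∫⁻ ξ, (∫⁻ ζ, K (ξ - ζ) * f ζ) ^ 2 ≤ (∫⁻ η, K η) ^ 2 * ∫⁻ ζ, f ζ ^ 2 := by
  have hI : ∀ ξ : ℝ × ℝ, ∫⁻ ζ, K (ξ - ζ) = ∫⁻ η, K η := fun ξ => lintegral_sub_left_eq_self K ξ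
  have hI2 : ∀ ζ : ℝ × ℝ, ∫⁻ ξ, K (ξ - ζ) = ∫⁻ η, K η := fun ξ => lintegral_sub_right_eq_self K ξ
  calc _ ≤ ∫⁻ ξ, (∫⁻ η, K η) * ∫⁻ ζ, K (ξ - ζ) * f ζ ^ 2 := by
        apply lintegral_mono; intro ξ
        have := lint_CS volume (fun ζ => K (ξ - ζ)) f (by fun_prop) hf.aemeasurable
        rwa [hI ξ] at this
    _ = (∫⁻ η, K η) * ∫⁻ ξ, ∫⁻ ζ, K (ξ - ζ) * f ζ ^ 2 := by
        rw [lintegral_const_mul]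
        apply Measurable.lintegral_prod_right' (f := fun p : (ℝ × ℝ) × (ℝ × ℝ) => K (p.1 - p.2) * f p.2 ^ 2)
        fun_prop
    _ = (∫⁻ η, K η) * ∫⁻ ζ, ∫⁻ ξ, K (ξ - ζ) * f ζ ^ 2 := by
        rw [lintegral_lintegral_swap]
        apply Measurable.aemeasurable
        change Measurable (fun p : (ℝ × ℝ) × (ℝ × ℝ) => K (p.1 - p.2) * f p.2 ^ 2)
        fun_prop
    _ = (∫⁻ η, K η) * ∫⁻ ζ, (∫⁻ η, K η) * f ζ ^ 2 := by
        congr 2; ext ζ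
        rw [lintegral_mul_const _ (by fun_prop), hI2]
    _ = _ := by rw [lintegral_const_mul _ (by fun_prop)]; ring

def Cc (n : ℕ) (u : ℝ × ℝ → ℂ) : Prop := ContDiff ℝ n u ∧ HasCompactSupport u

lemma Cc.integrable {n : ℕ} {u : ℝ × ℝ → ℂ} (h : Cc n u) : Integrable u :=
  h.1.continuous.integrable_of_hasCompactSupport h.2

lemma Cc.memLp {n : ℕ} {u : ℝ × ℝ → ℂ} (h : Cc n u) : MemLp u 2 :=
  h.1.continuous.memLp_of_hasCompactSupport h.2

lemma Cc.deriv {n : ℕ} {u : ℝ × ℝ → ℂ} (h : Cc (n+1) u) (e : ℝ × ℝ) :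
    Cc n (fun x => fderiv ℝ u x e) := by
  constructor
  · exact (h.1.fderiv_right (m := n) (by push_cast; exact le_rfl)).clm_apply contDiff_const
  · exact h.2.fderiv_apply (𝕜 := ℝ) e

lemma Cc.mul {n : ℕ} {u v : ℝ × ℝ → ℂ} (h : Cc n u) (hv : ContDiff ℝ n v) :
    Cc n (fun x => v x * u x) := ⟨hv.mul h.1, h.2.mul_left⟩

lemma Cc.FT_deriv {n : ℕ} {u : ℝ × ℝ → ℂ} (h : Cc (n+1) u) (e ξ : ℝ × ℝ) :
    FT (fun x => fderiv ℝ u x e) ξ = (2 * Real.pi * (e.1 * ξ.1 + e.2 * ξ.2) * Complex.I) * FT u ξ := by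
  simp only [FT]
  set E : ℝ × ℝ → ℂ := fun x => Complex.exp (-(2 * Real.pi * (x.1 * ξ.1 + x.2 * ξ.2)) * Complex.I) with hE
  let L : ℝ × ℝ →L[ℝ] ℂ := (-(2 * Real.pi * Complex.I)) • (Complex.ofRealCLM ∘L (ξ.1 • ContinuousLinearMap.fst ℝ ℝ ℝ + ξ.2 • ContinuousLinearMap.snd ℝ ℝ ℝ))
  have hEL : E = fun x => Complex.exp (L x) := by
    ext x; simp only [hE, L]; congr 1; simp; ring
  have hEd : ∀ x, HasFDerivAt E (E x • L) x := by
    intro x; rw [hEL]; exact (L.hasFDerivAt).cexp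
  have hEc : Continuous E := by rw [hEL]; fun_prop
  have hdc := (h.deriv e)
  have hfd : ∀ x, fderiv ℝ E x e = -((2 * Real.pi * (e.1 * ξ.1 + e.2 * ξ.2) * Complex.I)) * E x := by
    intro x; rw [(hEd x).fderiv]; simp [L]; ring
  have := integral_mul_fderiv_eq_neg_fderiv_mul_of_integrable (μ := (volume : Measure (ℝ × ℝ))) (f := E) (g := u) (v := e)
    (by
      simp only [hfd]
      apply Continuous.integrable_of_hasCompactSupport
      · exact (continuous_const.mul hEc).mul h.1.continuous
      · exact h.2.mul_left) 
    (by
      apply Continuous.integrable_of_hasCompactSupport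
      · exact hEc.mul hdc.1.continuous
      · exact hdc.2.mul_left) 
    (by
      apply Continuous.integrable_of_hasCompactSupport
      · exact hEc.mul h.1.continuous
      · exact h.2.mul_left) 
    (fun x _ => (hEd x).differentiableAt)
    (fun x _ => (h.1.differentiable (by norm_cast)).differentiableAt)
  rw [this]
  simp only [hfd]
  rw [← integral_const_mul, ← integral_neg]
  congr 1; ext x; ring

lemma Cc.FT_deriv3 {u : ℝ × ℝ → ℂ} (h : Cc 3 u) (e : ℝ × ℝ) :
    ∃ w, Cc 0 w ∧ ∀ ξ, FT w ξ = (2 * Real.pi * (e.1 * ξ.1 + e.2 * ξ.2) * Complex.I) ^ 3 * FT u ξ := by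
  have h1 := Cc.deriv (n := 2) h e
  have h2 := Cc.deriv (n := 1) h1 e
  have h3 := Cc.deriv (n := 0) h2 e
  refine ⟨_, h3, fun ξ => ?_⟩
  rw [Cc.FT_deriv (n := 0) h2, Cc.FT_deriv (n := 1) h1, Cc.FT_deriv (n := 2) h]
  ring

lemma Cc.FT_memLp {n : ℕ} {u : ℝ × ℝ → ℂ} (h : Cc n u) : MemLp (FT u) 2 :=
  ⟨(FT_cont h.integrable).aestronglyMeasurable, by rw [FT_planch h.integrable h.memLp]; exact h.memLp.2⟩

lemma Cc.decay2 {u : ℝ × ℝ → ℂ} (h : Cc 3 u) :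
    MemLp (fun ξ => (((1 + ‖ξ‖) ^ 3 : ℝ) : ℂ) * FT u ξ) 2 := by
  obtain ⟨w1, hw1, e1⟩ := h.FT_deriv3 (1, 0)
  obtain ⟨w2, hw2, e2⟩ := h.FT_deriv3 (0, 1)
  have H := ((h.FT_memLp.norm.add hw1.FT_memLp.norm).add hw2.FT_memLp.norm).const_mul 8
  refine H.mono ?_ ?_
  · apply Continuous.aestronglyMeasurable
    have := FT_cont h.integrable
    fun_prop
  · filter_upwards with ξ
    have hp : (1:ℝ) ≤ (2 * π) := by have := Real.pi_gt_three; linarith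
    have b1 : |ξ.1| ^ 3 * ‖FT u ξ‖ ≤ ‖FT w1 ξ‖ := by
      rw [e1]; simp only [norm_mul, norm_pow]
      gcongr
      simp [abs_of_pos Real.pi_pos]
      exact le_mul_of_one_le_left (abs_nonneg _) hp
    have b2 : |ξ.2| ^ 3 * ‖FT u ξ‖ ≤ ‖FT w2 ξ‖ := by
      rw [e2]; simp only [norm_mul, norm_pow]
      gcongr
      simp [abs_of_pos Real.pi_pos]
      exact le_mul_of_one_le_left (abs_nonneg _) hp
    have b3 : (1 + ‖ξ‖) ^ 3 ≤ 8 * (1 + |ξ.1| ^ 3 + |ξ.2| ^ 3) := by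
      have hm : ‖ξ‖ ^ 3 ≤ |ξ.1| ^ 3 + |ξ.2| ^ 3 := by
        rw [Prod.norm_def]
        rcases max_cases ‖ξ.1‖ ‖ξ.2‖ with h | h <;> rw [h.1] <;> simp only [Real.norm_eq_abs]
        · linarith [pow_nonneg (abs_nonneg ξ.2) 3]
        · linarith [pow_nonneg (abs_nonneg ξ.1) 3]
      have : (1 + ‖ξ‖) ^ 3 ≤ 8 * (1 + ‖ξ‖^3) := by
        have := norm_nonneg ξ
        nlinarith [mul_nonneg this (sq_nonneg (‖ξ‖ - 1)), sq_nonneg (‖ξ‖ - 1), mul_nonneg this this]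
      linarith
    simp only [norm_mul, Complex.norm_real, Pi.add_apply]
    have hn : ‖(1 + ‖ξ‖) ^ 3‖ = (1 + ‖ξ‖) ^ 3 := by
      rw [Real.norm_eq_abs, abs_of_nonneg (by positivity)]
    rw [hn]
    have h4 := mul_le_mul_of_nonneg_right b3 (norm_nonneg (FT u ξ))
    rw [Real.norm_of_nonneg (by positivity), Real.norm_of_nonneg (by positivity)]
    nlinarith

lemma Cc.decay1 {u : ℝ × ℝ → ℂ} (h : Cc 3 u) :
    Integrable (fun ξ => (((1 + ‖ξ‖) ^ (3/2 : ℝ) : ℝ) : ℂ) * FT u ξ) := by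
  have hw : MemLp (fun ξ : ℝ × ℝ => (((1 + ‖ξ‖) ^ (-(3/2) : ℝ) : ℝ) : ℂ)) 2 := by
    rw [memLp_two_iff_integrable_sq_norm]
    · have := integrable_one_add_norm (E := ℝ × ℝ) (μ := volume) (r := 3) (by simp; norm_num)
      refine this.congr ?_
      filter_upwards with ξ
      rw [Complex.norm_real, Real.norm_of_nonneg (by positivity), ← Real.rpow_natCast, ← Real.rpow_mul (by positivity)]
      norm_num
    · apply Continuous.aestronglyMeasurable
      apply Complex.continuous_ofReal.comp
      exact Continuous.rpow_const (by fun_prop) (fun x => Or.inl (by positivity))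
  have := hw.integrable_mul h.decay2
  refine this.congr ?_
  filter_upwards with ξ
  simp only [Pi.mul_apply]
  rw [← mul_assoc, ← Complex.ofReal_mul]
  congr 2
  rw [← Real.rpow_natCast, ← Real.rpow_add (by positivity)]
  norm_num


lemma norm_le_en (v : ℝ × ℝ) : ‖v‖ ≤ en v := by
  rw [Prod.norm_def, en]
  apply max_le <;> apply Real.le_sqrt_of_sq_le <;> simp only [Real.norm_eq_abs, sq_abs] <;> nlinarith [sq_nonneg v.1, sq_nonneg v.2]

lemma en_le (v : ℝ × ℝ) : en v ≤ 2 * ‖v‖ := by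
  rw [en]
  apply Real.sqrt_le_iff.2 ⟨by positivity, ?_⟩
  have h1 : v.1 ^ 2 ≤ ‖v‖ ^ 2 := by
    rw [← sq_abs v.1]; exact pow_le_pow_left₀ (abs_nonneg _) (norm_fst_le v) 2
  have h2 : v.2 ^ 2 ≤ ‖v‖ ^ 2 := by
    rw [← sq_abs v.2]; exact pow_le_pow_left₀ (abs_nonneg _) (norm_snd_le v) 2
  nlinarith [sq_nonneg ‖v‖]

lemma en_nonneg (v : ℝ × ℝ) : 0 ≤ en v := Real.sqrt_nonneg _

lemma en_smul (c : ℝ) (hc : 0 ≤ c) (v : ℝ × ℝ) : en (c • v) = c * en v := by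
  simp only [en, Prod.smul_fst, Prod.smul_snd, smul_eq_mul]
  rw [show (c * v.1)^2 + (c * v.2)^2 = c^2 * (v.1^2+v.2^2) by ring, Real.sqrt_mul (sq_nonneg _), Real.sqrt_sq hc]

lemma en_contDiffAt {v : ℝ × ℝ} (hv : v ≠ 0) {n : WithTop ℕ∞} : ContDiffAt ℝ n en v := by
  unfold en
  apply ContDiffAt.sqrt
  · fun_prop
  · intro h
    apply hv
    have h1 : v.1 = 0 := by nlinarith [sq_nonneg v.1, sq_nonneg v.2]
    have h2 : v.2 = 0 := by nlinarith [sq_nonneg v.1, sq_nonneg v.2]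
    exact Prod.ext h1 h2

lemma en_cont : Continuous en := by unfold en; fun_prop

/-- selected angular function -/
def phs (Θ : Polarization) (σ : Bool) (ξ : ℝ × ℝ) : ℝ := if σ then Θ.phip ξ else Θ.phim ξ

/-- radial dyadic part -/
def Dn (χ : ℝ → ℝ) (n : ℕ) (ξ : ℝ × ℝ) : ℝ :=
  if n = 0 then χ (en ξ) else
    (χ ((2 : ℝ) ^ (-(n : ℤ)) * en ξ) - χ ((2 : ℝ) ^ (-(n : ℤ) + 1) * en ξ))

lemma psiLP_zero (χ : ℝ → ℝ) (Θ : Polarization) (σ : Bool) (ξ : ℝ × ℝ) : psiLP χ Θ 0 σ ξ = Dn χ 0 ξ / 2 := by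
  simp [psiLP, Dn]

lemma psiLP_pos (χ : ℝ → ℝ) (Θ : Polarization) {n : ℕ} (hn : n ≠ 0) (σ : Bool) (ξ : ℝ × ℝ) :
    psiLP χ Θ n σ ξ = phs Θ σ ξ * Dn χ n ξ := by
  simp [psiLP, Dn, hn, phs]

def kk (ξ : ℝ × ℝ) : ℕ := Nat.log 2 ⌊en ξ⌋₊
def SS (ξ : ℝ × ℝ) : Finset ℕ := {kk ξ, kk ξ + 1}

lemma kk_lt (ξ : ℝ × ℝ) : en ξ < 2 ^ (kk ξ + 1) := by
  have := Nat.lt_pow_succ_log_self (b := 2) (by norm_num) ⌊en ξ⌋₊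
  have h2 := Nat.lt_of_floor_lt this
  exact_mod_cast h2

lemma le_kk (ξ : ℝ × ℝ) : kk ξ = 0 ∨ (2:ℝ) ^ (kk ξ) ≤ en ξ := by
  by_cases h : ⌊en ξ⌋₊ = 0
  · left; simp [kk, h]
  · right
    have := Nat.pow_log_le_self 2 h
    have h2 := (Nat.le_floor_iff (en_nonneg ξ)).1 this
    exact_mod_cast h2

lemma SS_lower {n : ℕ} {ξ : ℝ × ℝ} (h : n ∈ SS ξ) : (1 + ‖ξ‖) / 4 ≤ 2 ^ n := by
  have h0 : (2:ℝ) ^ (kk ξ) ≤ 2 ^ n := by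
    apply pow_le_pow_right₀ (by norm_num)
    simp [SS] at h; omega
  have h1 := kk_lt ξ
  rw [pow_succ] at h1
  have h2 : (1:ℝ) ≤ 2 ^ kk ξ := one_le_pow₀ (by norm_num)
  have := norm_le_en ξ
  linarith

lemma SS_upper {n : ℕ} {ξ : ℝ × ℝ} (h : n ∈ SS ξ) : (2:ℝ) ^ n ≤ 4 * (1 + ‖ξ‖) := by
  have h0 : (2:ℝ) ^ n ≤ 2 ^ (kk ξ + 1) := by
    apply pow_le_pow_right₀ (by norm_num)
    simp [SS] at h; omega
  rw [pow_succ] at h0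
  have := en_le ξ
  have h3 := norm_nonneg ξ
  rcases le_kk ξ with h1 | h1
  · rw [h1] at h0; norm_num at h0; linarith
  · linarith

lemma Dn_zero {χ : ℝ → ℝ} (hχ : ChiOK χ) {n : ℕ} {ξ : ℝ × ℝ} (h : n ∉ SS ξ) : Dn χ n ξ = 0 := by
  obtain ⟨-, h1, h2, -⟩ := hχ
  simp only [SS, Finset.mem_insert, Finset.mem_singleton, not_or] at h
  have hk := kk_lt ξ
  have hk' := le_kk ξ
  have hp : (0:ℝ) < 2 ^ n := by positivity
  have e1 : (2:ℝ) ^ (-(n:ℤ)) = (2 ^ n)⁻¹ := by rw [zpow_neg]; norm_cast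
  have e2 : (2:ℝ) ^ (-(n:ℤ) + 1) = (2 ^ n)⁻¹ * 2 := by rw [zpow_add₀ (by norm_num), e1, zpow_one]
  rcases Nat.lt_or_ge n (kk ξ) with hlt | hge
  · have hle : (2:ℝ) ^ kk ξ ≤ en ξ := hk'.resolve_left (by omega)
    have hle2 : (2:ℝ) ^ (n+1) ≤ en ξ := le_trans (pow_le_pow_right₀ (by norm_num) (by omega)) hle
    rw [pow_succ] at hle2
    have hA : 2 ≤ (2 ^ n)⁻¹ * en ξ := by
      rw [inv_mul_eq_div, le_div_iff₀ hp]; linarith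
    by_cases hn : n = 0
    · subst hn; simp [Dn]; apply h2; simpa using hle2
    · simp only [Dn, hn, if_false]
      rw [e1, e2, h2 _ hA, h2, sub_zero]
      nlinarith
  · have hn2 : kk ξ + 2 ≤ n := by omega
    have hle2 : (2:ℝ) ^ (kk ξ + 1) * 2 ≤ 2 ^ n := by
      rw [← pow_succ]; exact pow_le_pow_right₀ (by norm_num) (by omega)
    have hA : (2 ^ n)⁻¹ * 2 * en ξ ≤ 1 := by
      rw [mul_assoc, inv_mul_eq_div, div_le_one hp]; linarith
    have hn : n ≠ 0 := by omega
    simp only [Dn, hn, if_false]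
    rw [e1, e2, h1 _ hA, h1, sub_self]
    have : 0 ≤ (2 ^ n)⁻¹ * en ξ := mul_nonneg (by positivity) (en_nonneg _)
    linarith

lemma Dn_sum {χ : ℝ → ℝ} (hχ : ChiOK χ) (ξ : ℝ × ℝ) : Dn χ (kk ξ) ξ + Dn χ (kk ξ + 1) ξ = 1 := by
  obtain ⟨-, h1, h2, -⟩ := hχ
  have hk := kk_lt ξ
  have hk' := le_kk ξ
  generalize kk ξ = k at *
  have e1 : ∀ n : ℕ, (2:ℝ) ^ (-(n:ℤ)) = (2 ^ n)⁻¹ := by intro n; rw [zpow_neg]; norm_cast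
  have e2 : ∀ n : ℕ, (2:ℝ) ^ (-(n:ℤ) + 1) = (2 ^ n)⁻¹ * 2 := by intro n; rw [zpow_add₀ (by norm_num), e1, zpow_one]
  have hp : (0:ℝ) < 2 ^ k := by positivity
  have hA : χ ((2 ^ (k+1))⁻¹ * en ξ) = 1 := by
    apply h1; rw [inv_mul_eq_div, div_le_one (by positivity)]; exact hk.le
  have e3 : ((2:ℝ) ^ (k+1))⁻¹ * 2 = (2 ^ k)⁻¹ := by rw [pow_succ]; field_simp
  by_cases hk0 : k = 0
  · subst hk0
    have e4 := e2 (0+1)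
    rw [e3] at e4
    simp only [Dn, if_true, Nat.add_eq_zero_iff, one_ne_zero, and_false, if_false]
    rw [e1 (0+1), hA, e4]; simp
  · have hB : χ ((2 ^ k)⁻¹ * 2 * en ξ) = 0 := by
      apply h2
      have := hk'.resolve_left hk0
      rw [mul_assoc, inv_mul_eq_div, le_div_iff₀ hp]; linarith
    simp only [Dn, hk0, if_false, Nat.add_eq_zero_iff, one_ne_zero, and_false]
    rw [e1 (k+1), e1 k, e2 (k+1), e2 k, e3, hA, hB]; ring

lemma psi_zero {χ : ℝ → ℝ} (hχ : ChiOK χ) (Θ : Polarization) {n : ℕ} (σ : Bool) {ξ : ℝ × ℝ} (h : n ∉ SS ξ) :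
    psiLP χ Θ n σ ξ = 0 := by
  rcases eq_or_ne n 0 with rfl | hn
  · rw [psiLP_zero, Dn_zero hχ h]; simp
  · rw [psiLP_pos _ _ hn, Dn_zero hχ h]; simp

lemma phs_homog (Θ : Polarization) (σ : Bool) (c : ℝ) (hc : 0 < c) (v : ℝ × ℝ) : phs Θ σ (c • v) = phs Θ σ v := by
  cases σ <;> simp [phs, Θ.phim_def, Θ.homog_p c hc v]

lemma phs_mem (Θ : Polarization) (σ : Bool) (v : ℝ × ℝ) : phs Θ σ v ∈ Set.Icc (0:ℝ) 1 := by
  have := Θ.mem_Icc_p v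
  cases σ <;> simp [phs, Θ.phim_def] <;> simpa [and_comm] using this

lemma phs_smooth (Θ : Polarization) (σ : Bool) : ContDiffOn ℝ (⊤ : ℕ∞) (phs Θ σ) {v : ℝ × ℝ | v ≠ 0} := by
  cases σ
  · exact Θ.smooth_m
  · exact Θ.smooth_p

lemma isOpen_ne0 : IsOpen {v : ℝ × ℝ | v ≠ 0} := isOpen_ne

lemma measurable_of_contOn (f : ℝ × ℝ → ℝ) (h : ContinuousOn f {v : ℝ × ℝ | v ≠ 0}) : Measurable f := by
  apply measurable_of_restrict_of_restrict_compl (s := {v : ℝ × ℝ | v ≠ 0}) isOpen_ne0.measurableSet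
  · exact h.domRestrict.measurable
  · have : Subsingleton ({v : ℝ × ℝ | v ≠ 0}ᶜ : Set (ℝ × ℝ)) := by
      constructor; rintro ⟨a, ha⟩ ⟨b, hb⟩; simp at ha hb; simp [ha, hb]
    exact measurable_of_countable _

lemma psi_meas {χ : ℝ → ℝ} (hχ : ChiOK χ) (Θ : Polarization) (n : ℕ) (σ : Bool) : Measurable (psiLP χ Θ n σ) := by
  have hc := hχ.1.continuous
  have := en_cont
  have hD : Continuous (Dn χ n) := by
    unfold Dn; split_ifs <;> fun_prop
  rcases eq_or_ne n 0 with rfl | hn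
  · have : psiLP χ Θ 0 σ = fun ξ => Dn χ 0 ξ / 2 := by ext ξ; exact psiLP_zero _ _ _ _
    rw [this]; exact (hD.div_const 2).measurable
  · have : psiLP χ Θ n σ = fun ξ => phs Θ σ ξ * Dn χ n ξ := by ext ξ; exact psiLP_pos _ _ hn _ _
    rw [this]
    exact (measurable_of_contOn _ (phs_smooth Θ σ).continuousOn).mul hD.measurable

lemma lip_aux (f : ℝ × ℝ → ℝ) (h1 : ∀ x ≠ 0, ContDiffAt ℝ 1 f x) (c : ℝ) (h2 : ∀ x, en x < 1/2 → f x = c)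
    (h3 : ∀ x, 2 ≤ en x → f x = 0) : ∃ L : ℝ≥0, LipschitzWith L f := by
  have hs : ContDiff ℝ 1 f := by
    rw [contDiff_iff_contDiffAt]; intro x
    rcases eq_or_ne x 0 with rfl | hx
    · have : f =ᶠ[𝓝 0] fun _ => c := by
        have : ∀ᶠ x in 𝓝 (0 : ℝ × ℝ), en x < 1/2 := by
          apply en_cont.continuousAt.eventually_lt_const; simp [en]
        filter_upwards [this] with x hx using h2 x hx
      exact contDiffAt_const.congr_of_eventuallyEq this
    · exact h1 x hx
  have hc : HasCompactSupport f := by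
    apply HasCompactSupport.of_support_subset_isCompact (isCompact_closedBall (0 : ℝ × ℝ) 2)
    intro x hx
    rw [mem_closedBall_zero_iff]
    by_contra hcon
    exact hx (h3 x (by have := norm_le_en x; push Not at hcon; linarith))
  exact hs.lipschitzWith_of_hasCompactSupport hc (by norm_num)

lemma psi_lip {χ : ℝ → ℝ} (hχ : ChiOK χ) (Θ : Polarization) : ∃ L : ℝ, 0 ≤ L ∧ ∀ n σ ξ ζ,
    |psiLP χ Θ n σ ξ - psiLP χ Θ n σ ζ| ≤ L * (2 ^ n)⁻¹ * ‖ξ - ζ‖ := by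
  obtain ⟨hs, h1, h2, -⟩ := id hχ
  obtain ⟨L0, hL0⟩ := lip_aux (fun ξ => χ (en ξ) / 2) (fun x hx =>
      ((hs.contDiffAt.of_le (by exact_mod_cast le_top)).comp x (en_contDiffAt hx)).div_const 2) (1/2)
    (fun x hx => by rw [h1 _ (by linarith)]) (fun x hx => by rw [h2 _ hx]; simp)
  have hσ : ∀ σ, ∃ L : ℝ≥0, LipschitzWith L (fun ξ => phs Θ σ ξ * (χ (en ξ) - χ (2 * en ξ))) := by
    intro σ
    apply lip_aux (c := 0)
    · intro x hx
      apply ContDiffAt.mul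
      · exact ((phs_smooth Θ σ).contDiffAt (isOpen_ne0.mem_nhds hx)).of_le (by exact_mod_cast le_top)
      · apply ContDiffAt.sub
        · exact (hs.contDiffAt.of_le (by exact_mod_cast le_top)).comp x (en_contDiffAt hx)
        · exact (hs.contDiffAt.of_le (by exact_mod_cast le_top)).comp x (contDiffAt_const.mul (en_contDiffAt hx))
    · intro x hx; rw [h1 _ (by linarith), h1 _ (by linarith)]; simp
    · intro x hx; rw [h2 _ hx, h2 _ (by linarith)]; simp
  obtain ⟨Lt, hLt⟩ := hσ true
  obtain ⟨Lf, hLf⟩ := hσ false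
  refine ⟨L0 + Lt + Lf, by positivity, ?_⟩
  intro n σ ξ ζ
  have hN := norm_nonneg (ξ - ζ)
  rcases eq_or_ne n 0 with rfl | hn
  · have := hL0.dist_le_mul ξ ζ
    rw [Real.dist_eq, dist_eq_norm] at this
    simp only [psiLP, if_true]
    refine this.trans ?_
    simp only [pow_zero, inv_one, mul_one]
    gcongr
    have := Lt.2; have := Lf.2; simp only [NNReal.val_eq_coe] at *; linarith
  · have e : ∀ ξ, psiLP χ Θ n σ ξ = (fun ξ => phs Θ σ ξ * (χ (en ξ) - χ (2 * en ξ))) (((2:ℝ) ^ n)⁻¹ • ξ) := by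
      intro ξ
      have hp : (0:ℝ) < (2 ^ n)⁻¹ := by positivity
      have e1 : (2:ℝ) ^ (-(n:ℤ)) = (2 ^ n)⁻¹ := by rw [zpow_neg]; norm_cast
      have e2 : (2:ℝ) ^ (-(n:ℤ) + 1) = 2 * (2 ^ n)⁻¹ := by rw [zpow_add₀ (by norm_num), e1, zpow_one]; ring
      simp only [phs_homog Θ σ _ hp, en_smul _ hp.le]
      rw [psiLP_pos _ _ hn]; simp only [Dn, hn, if_false, e1, e2, mul_assoc]
    have hL : LipschitzWith (L0 + Lt + Lf) (fun ξ => phs Θ σ ξ * (χ (en ξ) - χ (2 * en ξ))) := by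
      cases σ
      · exact hLf.weaken le_add_self
      · exact hLt.weaken (le_add_right le_add_self)
    have := hL.dist_le_mul (((2:ℝ) ^ n)⁻¹ • ξ) (((2:ℝ) ^ n)⁻¹ • ζ)
    rw [Real.dist_eq, dist_eq_norm, ← smul_sub, norm_smul, Real.norm_of_nonneg (by positivity)] at this
    rw [e, e]
    push_cast at this
    linarith


/-- weighted coefficient -/
def cf (χ : ℝ → ℝ) (Θ : Polarization) (p q : ℝ) (i : ℕ × Bool) (ξ : ℝ × ℝ) : ℝ :=
  (2:ℝ) ^ ((if i.2 then p else q) * (i.1 : ℝ)) * psiLP χ Θ i.1 i.2 ξ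

def Wt (χ : ℝ → ℝ) (Θ : Polarization) (p q : ℝ) (ξ : ℝ × ℝ) : ℝ≥0∞ :=
  ∑' n : ℕ, (ENNReal.ofReal (cf χ Θ p q (n, true) ξ ^ 2) + ENNReal.ofReal (cf χ Θ p q (n, false) ξ ^ 2))

def bw (χ : ℝ → ℝ) (Θ : Polarization) (p q : ℝ) (ξ : ℝ × ℝ) : ℝ := Real.sqrt (Wt χ Θ p q ξ).toReal

lemma cf_meas {χ : ℝ → ℝ} (hχ : ChiOK χ) (Θ : Polarization) (p q : ℝ) (i : ℕ × Bool) : Measurable (cf χ Θ p q i) :=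
  (psi_meas hχ Θ i.1 i.2).const_mul _

lemma Wt_meas {χ : ℝ → ℝ} (hχ : ChiOK χ) (Θ : Polarization) (p q : ℝ) : Measurable (Wt χ Θ p q) := by
  apply Measurable.tsum
  intro n
  exact (((cf_meas hχ Θ p q _).pow_const 2).ennreal_ofReal).add (((cf_meas hχ Θ p q _).pow_const 2).ennreal_ofReal)

lemma bw_meas {χ : ℝ → ℝ} (hχ : ChiOK χ) (Θ : Polarization) (p q : ℝ) : Measurable (bw χ Θ p q) :=
  (Wt_meas hχ Θ p q).ennreal_toReal.sqrt

lemma cf_zero {χ : ℝ → ℝ} (hχ : ChiOK χ) (Θ : Polarization) (p q : ℝ) {n : ℕ} (σ : Bool) {ξ : ℝ × ℝ} (h : n ∉ SS ξ) :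
    cf χ Θ p q (n, σ) ξ = 0 := by simp [cf, psi_zero hχ Θ σ h]

lemma Wt_eq {χ : ℝ → ℝ} (hχ : ChiOK χ) (Θ : Polarization) (p q : ℝ) (ξ : ℝ × ℝ) (S : Finset ℕ) (hS : SS ξ ⊆ S) :
    Wt χ Θ p q ξ = ENNReal.ofReal (∑ n ∈ S, (cf χ Θ p q (n, true) ξ ^ 2 + cf χ Θ p q (n, false) ξ ^ 2)) := by
  rw [Wt, tsum_eq_sum (s := S), ENNReal.ofReal_sum_of_nonneg (fun i _ => by positivity)]
  · apply Finset.sum_congr rfl; intro n _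
    rw [ENNReal.ofReal_add (by positivity) (by positivity)]
  · intro n hn
    have : n ∉ SS ξ := fun h => hn (hS h)
    rw [cf_zero hχ Θ p q _ this, cf_zero hχ Θ p q _ this]; simp

lemma bw_eq {χ : ℝ → ℝ} (hχ : ChiOK χ) (Θ : Polarization) (p q : ℝ) (ξ : ℝ × ℝ) (S : Finset ℕ) (hS : SS ξ ⊆ S) :
    bw χ Θ p q ξ = Real.sqrt (∑ n ∈ S, (cf χ Θ p q (n, true) ξ ^ 2 + cf χ Θ p q (n, false) ξ ^ 2)) := by
  rw [bw, Wt_eq hχ Θ p q ξ S hS, ENNReal.toReal_ofReal (Finset.sum_nonneg (fun i _ => by positivity))]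

lemma bw_nonneg {χ : ℝ → ℝ} (Θ : Polarization) (p q : ℝ) (ξ : ℝ × ℝ) : 0 ≤ bw χ Θ p q ξ := Real.sqrt_nonneg _

lemma bw_enorm_sq {χ : ℝ → ℝ} (hχ : ChiOK χ) (Θ : Polarization) (p q : ℝ) (ξ : ℝ × ℝ) :
    ‖bw χ Θ p q ξ‖ₑ ^ 2 = Wt χ Θ p q ξ := by
  have hfin : Wt χ Θ p q ξ ≠ ⊤ := by rw [Wt_eq hχ Θ p q ξ _ le_rfl]; exact ENNReal.ofReal_ne_top
  rw [Real.enorm_eq_ofReal (bw_nonneg Θ p q ξ), ← ENNReal.ofReal_pow (bw_nonneg Θ p q ξ), bw,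
    Real.sq_sqrt ENNReal.toReal_nonneg, ENNReal.ofReal_toReal hfin]

lemma eL2_sq (f : ℝ × ℝ → ℂ) : eLpNorm f 2 volume ^ 2 = ∫⁻ x, ‖f x‖ₑ ^ 2 := by
  have := eLpNorm_nnreal_pow_eq_lintegral (μ := (volume : Measure (ℝ × ℝ))) (f := f) (p := 2) (by norm_num)
  simpa using this

lemma half_sq (y : ℝ≥0∞) : (y ^ (1/2:ℝ)) ^ 2 = y := by
  rw [← ENNReal.rpow_natCast, ← ENNReal.rpow_mul]; norm_num
lemma sq_half (y : ℝ≥0∞) : (y ^ 2) ^ (1/2:ℝ) = y := by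
  rw [← ENNReal.rpow_natCast, ← ENNReal.rpow_mul]; norm_num

lemma anorm_eq {χ : ℝ → ℝ} (hχ : ChiOK χ) (Θ : Polarization) (p q : ℝ) (u : ℝ × ℝ → ℂ) (hu : Integrable u) :
    anorm χ Θ p q u = eLpNorm (fun ξ => (bw χ Θ p q ξ : ℂ) * FT u ξ) 2 volume := by
  rw [← sq_half (eLpNorm (fun ξ => (bw χ Θ p q ξ : ℂ) * FT u ξ) 2 volume), anorm]
  congr 1
  have hF := (FT_cont hu).measurable
  have hseg : ∀ (s : ℝ) σ, segNorm χ Θ s σ u ^ 2 = ∫⁻ ξ, (∑' n : ℕ, ENNReal.ofReal ((2:ℝ) ^ (2 * s * n)) * ENNReal.ofReal (psiLP χ Θ n σ ξ ^ 2)) * ‖FT u ξ‖ₑ ^ 2 := by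
    intro s σ
    rw [segNorm, half_sq]
    simp_rw [eL2_sq, ← ENNReal.tsum_mul_right]
    have hm : ∀ n, Measurable (fun ξ => ENNReal.ofReal (psiLP χ Θ n σ ξ ^ 2)) := fun n => ((psi_meas hχ Θ n σ).pow_const 2).ennreal_ofReal
    rw [lintegral_tsum]
    · congr 1; ext n
      rw [← lintegral_const_mul]
      · congr 1; ext ξ
        rw [enorm_mul, mul_pow, ← mul_assoc]
        congr 1
        congr 1
        rw [← ofReal_norm, Complex.norm_real, Real.norm_eq_abs, ← ENNReal.ofReal_pow (abs_nonneg _), sq_abs]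
      · have := psi_meas hχ Θ n σ
        exact ((Complex.measurable_ofReal.comp this).mul hF).enorm.pow_const 2
    · intro n
      exact (((hm n).const_mul _).mul (hF.enorm.pow_const 2)).aemeasurable
  rw [hseg, hseg, eL2_sq, ← lintegral_add_left]
  · congr 1; ext ξ
    rw [← add_mul, enorm_mul, mul_pow, ← ENNReal.tsum_add]
    congr 1
    have : ‖(bw χ Θ p q ξ : ℂ)‖ₑ = ‖bw χ Θ p q ξ‖ₑ := by
      rw [← ofReal_norm, ← ofReal_norm, Complex.norm_real]
    rw [this, bw_enorm_sq hχ, Wt]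
    congr 1; ext n
    have e : ∀ s : ℝ, ((2:ℝ) ^ (s * (n:ℝ))) ^ 2 = (2:ℝ) ^ (2 * s * n) := by
      intro s; rw [← Real.rpow_natCast, ← Real.rpow_mul (by norm_num)]; congr 1; push_cast; ring
    simp only [cf, if_true, Bool.false_eq_true, if_false, mul_pow, e]
    rw [ENNReal.ofReal_mul (by positivity), ENNReal.ofReal_mul (by positivity)]
  · apply Measurable.mul _ (hF.enorm.pow_const 2)
    apply Measurable.tsum
    intro n
    exact (((psi_meas hχ Θ n true).pow_const 2).ennreal_ofReal).const_mul _

lemma sqrt_sub_le {ι : Type*} [Fintype ι] (a b : ι → ℝ) :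
    |Real.sqrt (∑ i, a i ^ 2) - Real.sqrt (∑ i, b i ^ 2)| ≤ ∑ i, |a i - b i| := by
  have h := abs_norm_sub_norm_le (WithLp.toLp 2 a : EuclideanSpace ℝ ι) (WithLp.toLp 2 b)
  rw [← WithLp.toLp_sub, EuclideanSpace.norm_eq, EuclideanSpace.norm_eq, EuclideanSpace.norm_eq] at h
  simp only [Real.norm_eq_abs, sq_abs, Pi.sub_apply] at h
  refine h.trans ?_
  apply Real.sqrt_le_iff.2 ⟨Finset.sum_nonneg (fun i _ => abs_nonneg _), ?_⟩
  have := Finset.sum_sq_le_sq_sum_of_nonneg (s := Finset.univ) (f := fun i => |a i - b i|) (fun i _ => abs_nonneg _)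
  simpa using this

lemma bw_diff {χ : ℝ → ℝ} (hχ : ChiOK χ) (Θ : Polarization) (p q : ℝ) (ξ ζ : ℝ × ℝ) (M : ℝ)
    (h : ∀ n ∈ SS ξ ∪ SS ζ, ∀ σ, |cf χ Θ p q (n, σ) ξ - cf χ Θ p q (n, σ) ζ| ≤ M) :
    |bw χ Θ p q ξ - bw χ Θ p q ζ| ≤ 8 * M := by
  have hcard : (SS ξ ∪ SS ζ).card ≤ 4 := by
    refine (Finset.card_union_le _ _).trans ?_
    have : ∀ x, (SS x).card ≤ 2 := fun x => Finset.card_le_two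
    have := this ξ; have := Finset.card_le_two (a := kk ζ) (b := kk ζ + 1)
    unfold SS at *; omega
  rw [bw_eq hχ Θ p q ξ (SS ξ ∪ SS ζ) Finset.subset_union_left, bw_eq hχ Θ p q ζ (SS ξ ∪ SS ζ) Finset.subset_union_right]
  have hM : 0 ≤ M := (abs_nonneg _).trans (h (kk ξ) (by simp [SS]) true)
  generalize SS ξ ∪ SS ζ = S at *
  have e : ∀ ξ, ∑ n ∈ S, (cf χ Θ p q (n, true) ξ ^ 2 + cf χ Θ p q (n, false) ξ ^ 2) = ∑ i : S × Bool, cf χ Θ p q (i.1, i.2) ξ ^ 2 := by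
    intro ξ
    rw [Fintype.sum_prod_type, ← Finset.sum_coe_sort S]
    simp
  rw [e, e]
  refine (sqrt_sub_le _ _).trans ?_
  calc _ ≤ ∑ i : S × Bool, M := Finset.sum_le_sum (fun i _ => h i.1 i.1.2 i.2)
    _ = (S.card * 2 : ℕ) * M := by simp
    _ ≤ _ := by
      gcongr
      have : (S.card * 2 : ℕ) ≤ 8 := by omega
      exact_mod_cast this

lemma bw_lip {χ : ℝ → ℝ} (hχ : ChiOK χ) (Θ : Polarization) : ∃ L : ℝ, 0 ≤ L ∧
    (∀ ξ ζ, |bw χ Θ 1 0 ξ - bw χ Θ 1 0 ζ| ≤ L * ‖ξ - ζ‖) ∧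
    (∀ ξ ζ, phs Θ true ξ = 0 → phs Θ true ζ = 0 → ‖ξ - ζ‖ ≤ ‖ζ‖ / 2 → |bw χ Θ 1 0 ξ - bw χ Θ 1 0 ζ| ≤ L * ‖ξ - ζ‖ / (1 + ‖ζ‖)) := by
  obtain ⟨L, hL, h⟩ := psi_lip hχ Θ
  refine ⟨64 * L, by positivity, ?_, ?_⟩
  · intro ξ ζ
    have := bw_diff hχ Θ 1 0 ξ ζ (L * ‖ξ - ζ‖) ?_
    · have := mul_nonneg hL (norm_nonneg (ξ - ζ)); linarith
    intro n _ σ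
    simp only [cf]
    rw [← mul_sub, abs_mul]
    have h1 : |(2:ℝ) ^ ((if σ = true then (1:ℝ) else 0) * (n:ℝ))| ≤ 2 ^ n := by
      rw [abs_of_pos (by positivity)]
      cases σ
      · simp; exact one_le_pow₀ (by norm_num)
      · simp
    calc _ ≤ 2 ^ n * (L * (2 ^ n)⁻¹ * ‖ξ - ζ‖) := by
          gcongr; exact h n σ ξ ζ
      _ = _ := by field_simp
  · intro ξ ζ hξ hζ hd
    have := bw_diff hχ Θ 1 0 ξ ζ (8 * L * ‖ξ - ζ‖ / (1 + ‖ζ‖)) ?_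
    · refine this.trans (le_of_eq ?_); ring
    intro n hn σ
    have hz := norm_nonneg ζ
    have hlow : (1 + ‖ζ‖) / 8 ≤ 2 ^ n := by
      rcases Finset.mem_union.1 hn with hn | hn
      · have := SS_lower hn
        have h3 : ‖ζ‖ ≤ ‖ξ‖ + ‖ξ - ζ‖ := by
          have := norm_sub_norm_le ζ ξ; rw [norm_sub_rev] at this; linarith
        linarith
      · have := SS_lower hn; linarith
    have hc : |cf χ Θ 1 0 (n, σ) ξ - cf χ Θ 1 0 (n, σ) ζ| ≤ |psiLP χ Θ n σ ξ - psiLP χ Θ n σ ζ| := by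
      cases σ
      · simp [cf]
      · rcases eq_or_ne n 0 with rfl | hn0
        · simp [cf]
        · simp [cf, psiLP_pos _ _ hn0, hξ, hζ]
    refine hc.trans ((h n σ ξ ζ).trans ?_)
    have hinv : ((2:ℝ) ^ n)⁻¹ ≤ 8 / (1 + ‖ζ‖) := by
      rw [inv_le_comm₀ (by positivity) (by positivity), inv_div]; exact hlow
    calc L * (2 ^ n)⁻¹ * ‖ξ - ζ‖ ≤ L * (8 / (1 + ‖ζ‖)) * ‖ξ - ζ‖ := by gcongr
      _ = _ := by ring

lemma cone_margin (Θ Θ' : Polarization) (h : PolLt Θ' Θ) : ∃ c : ℝ, 0 < c ∧ c ≤ 1/2 ∧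
    ∀ ζ ∉ Θ.Cp, ∀ ξ, ‖ξ - ζ‖ < c * ‖ζ‖ → ξ ∈ Θ'.Cm := by
  have hK : IsCompact (closure (Set.univ \ Θ.Cp) ∩ Metric.sphere (0 : ℝ × ℝ) 1) :=
    (isCompact_sphere _ _).inter_left isClosed_closure
  have hsub : (closure (Set.univ \ Θ.Cp) ∩ Metric.sphere (0 : ℝ × ℝ) 1) ⊆ interior Θ'.Cm := by
    rintro x ⟨hx, hx1⟩
    apply h
    refine ⟨hx, ?_⟩
    rintro rfl
    simp at hx1
  obtain ⟨c, hc, hcs⟩ := hK.exists_thickening_subset_open isOpen_interior hsub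
  refine ⟨min c (1/2), by positivity, min_le_right _ _, ?_⟩
  intro ζ hζ ξ hξ
  have h0 : (0 : ℝ × ℝ) ∈ Θ.Cp := by
    have : (0 : ℝ × ℝ) ∈ Θ.Cp ∩ Θ.Cm := by rw [Θ.inter_eq]; rfl
    exact this.1
  have hz : ζ ≠ 0 := by rintro rfl; exact hζ h0
  have hn : 0 < ‖ζ‖ := norm_pos_iff.2 hz
  have h1 : ‖ζ‖⁻¹ • ζ ∈ closure (Set.univ \ Θ.Cp) ∩ Metric.sphere (0 : ℝ × ℝ) 1 := by
    constructor
    · apply subset_closure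
      refine ⟨trivial, fun hm => hζ ?_⟩
      have := Θ.cone_p ‖ζ‖ _ hm
      rwa [smul_smul, mul_inv_cancel₀ hn.ne', one_smul] at this
    · simp [norm_smul, hn.ne']
  have h2 : ‖ζ‖⁻¹ • ξ ∈ Metric.thickening c (closure (Set.univ \ Θ.Cp) ∩ Metric.sphere (0 : ℝ × ℝ) 1) := by
    rw [Metric.mem_thickening_iff]
    refine ⟨_, h1, ?_⟩
    rw [dist_eq_norm, ← smul_sub, norm_smul, norm_inv, norm_norm, inv_mul_lt_iff₀ hn]
    calc _ < _ := hξ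
      _ ≤ c * ‖ζ‖ := by gcongr; exact min_le_left _ _
      _ = _ := mul_comm _ _
  have h3 := interior_subset (hcs h2)
  have := Θ'.cone_m ‖ζ‖ _ h3
  rwa [smul_smul, mul_inv_cancel₀ hn.ne', one_smul] at this


lemma phs_false (Θ : Polarization) (ξ : ℝ × ℝ) : phs Θ false ξ = 1 - phs Θ true ξ := by
  simp [phs, Θ.phim_def]

lemma psi_sq_sum (χ : ℝ → ℝ) (Θ : Polarization) (n : ℕ) (ξ : ℝ × ℝ) :
    Dn χ n ξ ^ 2 / 2 ≤ psiLP χ Θ n true ξ ^ 2 + psiLP χ Θ n false ξ ^ 2 := by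
  rcases eq_or_ne n 0 with rfl | hn
  · rw [psiLP_zero, psiLP_zero]; nlinarith
  · rw [psiLP_pos _ _ hn, psiLP_pos _ _ hn, phs_false]
    generalize phs Θ true ξ = t
    nlinarith [sq_nonneg ((2 * t - 1) * Dn χ n ξ)]

lemma SS_sum (f : ℕ → ℝ) (ξ : ℝ × ℝ) : ∑ n ∈ SS ξ, f n = f (kk ξ) + f (kk ξ + 1) := by
  rw [SS, Finset.sum_pair (by omega)]

lemma Dn_sq_sum {χ : ℝ → ℝ} (hχ : ChiOK χ) (ξ : ℝ × ℝ) : 1 / 2 ≤ ∑ n ∈ SS ξ, Dn χ n ξ ^ 2 := by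
  rw [SS_sum]
  have := Dn_sum hχ ξ
  nlinarith [sq_nonneg (Dn χ (kk ξ) ξ - Dn χ (kk ξ + 1) ξ)]

lemma pw (s : ℝ) (n : ℕ) : ((2:ℝ) ^ (s * (n:ℝ))) ^ 2 = (2:ℝ) ^ (2 * s * n) := by
  rw [← Real.rpow_natCast, ← Real.rpow_mul (by norm_num)]; congr 1; push_cast; ring

lemma m_low {χ : ℝ → ℝ} (hχ : ChiOK χ) (Θ : Polarization) {ε : ℝ} (h0 : 0 < ε) (h1 : ε < 1/2) (ζ : ℝ × ℝ) :
    1 / 4 / Real.sqrt (1 + ‖ζ‖) ≤ bw χ Θ (1 - ε) (-ε) ζ := by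
  rw [bw_eq hχ Θ _ _ ζ _ le_rfl]
  have hN : 0 < 1 + ‖ζ‖ := by positivity
  apply Real.le_sqrt_of_sq_le
  rw [div_pow, Real.sq_sqrt hN.le]
  have hterm : ∀ n ∈ SS ζ, 1 / (8 * (1 + ‖ζ‖)) * Dn χ n ζ ^ 2 ≤ cf χ Θ (1 - ε) (-ε) (n, true) ζ ^ 2 + cf χ Θ (1 - ε) (-ε) (n, false) ζ ^ 2 := by
    intro n hn
    have hu := SS_upper hn
    have hb : 1 / (4 * (1 + ‖ζ‖)) ≤ (2:ℝ) ^ (2 * (-ε) * (n:ℝ)) := by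
      calc 1 / (4 * (1 + ‖ζ‖)) ≤ 1 / (2:ℝ) ^ n := by gcongr
        _ = (2:ℝ) ^ (-(n:ℝ)) := by rw [Real.rpow_neg (by norm_num), Real.rpow_natCast, one_div]
        _ ≤ _ := by
          apply Real.rpow_le_rpow_of_exponent_le (by norm_num)
          have : (0:ℝ) ≤ n := by positivity
          nlinarith
    have hb' : 1 / (4 * (1 + ‖ζ‖)) ≤ (2:ℝ) ^ (2 * (1-ε) * (n:ℝ)) := by
      refine hb.trans (Real.rpow_le_rpow_of_exponent_le (by norm_num) ?_)
      have : (0:ℝ) ≤ n := by positivity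
      nlinarith
    simp only [cf, if_true, Bool.false_eq_true, if_false, mul_pow, pw]
    have := psi_sq_sum χ Θ n ζ
    calc _ = 1 / (4 * (1 + ‖ζ‖)) * (Dn χ n ζ ^ 2 / 2) := by field_simp; ring
      _ ≤ 1 / (4 * (1 + ‖ζ‖)) * (psiLP χ Θ n true ζ ^ 2 + psiLP χ Θ n false ζ ^ 2) := by gcongr
      _ ≤ _ := by rw [mul_add]; gcongr
  refine le_trans ?_ (Finset.sum_le_sum hterm)
  rw [← Finset.mul_sum]
  calc _ = 1 / (8 * (1 + ‖ζ‖)) * (1/2) := by field_simp; norm_num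
    _ ≤ _ := by gcongr; exact Dn_sq_sum hχ ζ

lemma m_low_cone {χ : ℝ → ℝ} (hχ : ChiOK χ) (Θ : Polarization) {ε : ℝ} (h0 : 0 < ε) (h1 : ε < 1/2) (ζ : ℝ × ℝ)
    (hζ : ζ ∈ Θ.Cp) : 1 / 4 ≤ bw χ Θ (1 - ε) (-ε) ζ := by
  rcases eq_or_ne ζ 0 with rfl | hz
  · simpa using m_low hχ Θ h0 h1 0
  rw [bw_eq hχ Θ _ _ ζ _ le_rfl]
  apply Real.le_sqrt_of_sq_le
  have hterm : ∀ n ∈ SS ζ, 1 / 4 * Dn χ n ζ ^ 2 ≤ cf χ Θ (1 - ε) (-ε) (n, true) ζ ^ 2 + cf χ Θ (1 - ε) (-ε) (n, false) ζ ^ 2 := by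
    intro n hn
    have hb' : 1 ≤ (2:ℝ) ^ (2 * (1-ε) * (n:ℝ)) := by
      apply Real.one_le_rpow (by norm_num)
      have : (0:ℝ) ≤ n := by positivity
      nlinarith
    have hph : phs Θ true ζ = 1 := Θ.one_on_p ζ hζ hz
    have hps : 1 / 4 * Dn χ n ζ ^ 2 ≤ psiLP χ Θ n true ζ ^ 2 := by
      rcases eq_or_ne n 0 with rfl | hn
      · rw [psiLP_zero]; nlinarith
      · rw [psiLP_pos _ _ hn, hph]; nlinarith [sq_nonneg (Dn χ n ζ)]
    simp only [cf, if_true, mul_pow, pw]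
    have h2 : psiLP χ Θ n true ζ ^ 2 ≤ (2:ℝ) ^ (2 * (1-ε) * (n:ℝ)) * psiLP χ Θ n true ζ ^ 2 := le_mul_of_one_le_left (sq_nonneg _) hb'
    have h3 : 0 ≤ (2:ℝ) ^ (2 * (if false = true then 1 - ε else -ε) * (n:ℝ)) * psiLP χ Θ n false ζ ^ 2 := by positivity
    linarith
  refine le_trans ?_ (Finset.sum_le_sum hterm)
  rw [← Finset.mul_sum]
  have := Dn_sq_sum hχ ζ
  linarith

lemma phs_zero_of_not_mem {Θ Θ' : Polarization} (h : PolLt Θ' Θ) {ξ : ℝ × ℝ} (h0 : ξ ≠ 0) (hξ : ξ ∉ Θ.Cp) : phs Θ' true ξ = 0 := by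
  have : ξ ∈ interior Θ'.Cm := h ⟨subset_closure ⟨trivial, hξ⟩, h0⟩
  exact Θ'.zero_on_m ξ (interior_subset this) h0

lemma rpow32 (t : ℝ) (ht : 0 ≤ t) : (1 + t) ^ (3/2 : ℝ) = (1 + t) * Real.sqrt (1 + t) := by
  rw [Real.sqrt_eq_rpow, ← Real.rpow_one_add' (by positivity) (by norm_num)]; norm_num

lemma key {χ : ℝ → ℝ} (hχ : ChiOK χ) {Θ Θ' : Polarization} (h : PolLt Θ' Θ) {ε : ℝ} (h0 : 0 < ε) (h1 : ε < 1/2) :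
    ∃ C : ℝ, 0 ≤ C ∧ ∀ ξ ζ, |bw χ Θ' 1 0 ξ - bw χ Θ' 1 0 ζ| ≤ C * (1 + ‖ξ - ζ‖) ^ (3/2:ℝ) * bw χ Θ (1 - ε) (-ε) ζ := by
  obtain ⟨L, hL, hl1, hl2⟩ := bw_lip hχ Θ'
  obtain ⟨c, hc, hc2, hcone⟩ := cone_margin Θ Θ' h
  refine ⟨4 * L * Real.sqrt (1 + 1 / c), by positivity, ?_⟩
  intro ξ ζ
  rw [rpow32 _ (norm_nonneg _)]
  have hη := norm_nonneg (ξ - ζ)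
  set y := ‖ξ - ζ‖ with hy
  have hs1 : 1 ≤ Real.sqrt (1 + y) := by rw [Real.one_le_sqrt]; linarith
  have hsc : 1 ≤ Real.sqrt (1 + 1/c) := by rw [Real.one_le_sqrt]; have : 0 < 1 / c := by positivity
                                           linarith
  by_cases hz : ζ ∈ Θ.Cp
  · have hm := m_low_cone hχ Θ h0 h1 ζ hz
    calc _ ≤ L * y := hl1 ξ ζ
      _ ≤ L * (1 + y) := by gcongr; linarith
      _ = 4 * L * 1 * ((1 + y) * 1) * (1/4) := by ring
      _ ≤ _ := by gcongr
  · have hm := m_low hχ Θ h0 h1 ζ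
    have hzn := norm_nonneg ζ
    have hsz : 0 < Real.sqrt (1 + ‖ζ‖) := by positivity
    by_cases hnear : y < c * ‖ζ‖
    · have hzero : ‖ζ‖ ≠ 0 := by intro h; rw [h] at hnear; linarith
      have hz0 : ζ ≠ 0 := by simpa using hzero
      have hx := hcone ζ hz ξ hnear
      have hd : y ≤ ‖ζ‖ / 2 := by nlinarith
      have hx0 : ξ ≠ 0 := by
        rintro rfl
        rw [hy, zero_sub, norm_neg] at hd
        have : 0 < ‖ζ‖ := by positivity
        linarith
      have p1 : phs Θ' true ξ = 0 := Θ'.zero_on_m ξ hx hx0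
      have p2 := phs_zero_of_not_mem h hz0 hz
      have hz1 : Real.sqrt (1 + ‖ζ‖) ≤ 1 + ‖ζ‖ := by
        rw [Real.sqrt_le_left (by positivity)]; nlinarith
      calc _ ≤ L * y / (1 + ‖ζ‖) := hl2 ξ ζ p1 p2 hd
        _ ≤ L * (1 + y) / Real.sqrt (1 + ‖ζ‖) := by gcongr; linarith
        _ = 4 * L * 1 * ((1 + y) * 1) * (1/4 / Real.sqrt (1 + ‖ζ‖)) := by ring
        _ ≤ _ := by gcongr
    · push Not at hnear
      have hcmp : Real.sqrt (1 + ‖ζ‖) ≤ Real.sqrt (1 + 1/c) * Real.sqrt (1 + y) := by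
        rw [← Real.sqrt_mul (by positivity)]
        apply Real.sqrt_le_sqrt
        have : ‖ζ‖ ≤ 1 / c * y := by rw [one_div, ← div_eq_inv_mul, le_div_iff₀ hc]; linarith
        have h2 : 0 < 1 / c := by positivity
        nlinarith
      calc _ ≤ L * y := hl1 ξ ζ
        _ ≤ L * (1 + y) := by gcongr; linarith
        _ = 4 * L * (1 + y) * Real.sqrt (1 + ‖ζ‖) * (1/4 / Real.sqrt (1 + ‖ζ‖)) := by field_simp
        _ ≤ 4 * L * (1 + y) * (Real.sqrt (1 + 1/c) * Real.sqrt (1 + y)) * bw χ Θ (1 - ε) (-ε) ζ := by gcongr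
        _ = _ := by ring

lemma Wt_cmp {χ : ℝ → ℝ} {Θ Θ' : Polarization} (h : PolLt Θ' Θ) {ε : ℝ} (h0 : 0 < ε) (h1 : ε < 1/2)
    (ξ : ℝ × ℝ) (hξ : ξ ≠ 0) :
    Wt χ Θ' 1 0 ξ ≤ Wt χ Θ 1 0 ξ + 2 * Wt χ Θ (1 - ε) (-ε) ξ := by
  simp only [Wt]
  rw [← ENNReal.tsum_mul_left, ← ENNReal.tsum_add]
  apply ENNReal.tsum_le_tsum
  intro n
  have e2 : (2:ℝ≥0∞) = ENNReal.ofReal 2 := by simp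
  rw [e2, ← ENNReal.ofReal_add (by positivity) (by positivity), ← ENNReal.ofReal_add (by positivity) (by positivity), ← ENNReal.ofReal_add (by positivity) (by positivity), ← ENNReal.ofReal_mul (by norm_num),
   ← ENNReal.ofReal_add (by positivity) (by positivity)]
  apply ENNReal.ofReal_le_ofReal
  rcases eq_or_ne n 0 with rfl | hn
  · simp only [cf, psiLP_zero]
    simp
    positivity
  simp only [cf, if_true, Bool.false_eq_true, if_false, mul_pow, pw, psiLP_pos _ _ hn, phs_false]
  have hn0 : (0:ℝ) ≤ n := by positivity
  set a : ℝ := (2:ℝ) ^ (2 * 1 * (n:ℝ)) with ha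
  have ha1 : 1 ≤ a := Real.one_le_rpow (by norm_num) (by nlinarith)
  have hb1 : (2:ℝ) ^ (2 * 0 * (n:ℝ)) = 1 := by simp
  rw [hb1]
  set d := (2:ℝ) ^ (2 * (-ε) * (n:ℝ))
  set e := (2:ℝ) ^ (2 * (1-ε) * (n:ℝ))
  have hde : d ≤ e := Real.rpow_le_rpow_of_exponent_le (by norm_num) (by nlinarith)
  have had : a⁻¹ ≤ d := by
    rw [ha, ← Real.rpow_neg (by norm_num)]
    exact Real.rpow_le_rpow_of_exponent_le (by norm_num) (by nlinarith)
  have hd0 : 0 < d := by positivity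
  have he0 : 0 < e := by positivity
  have hai : 0 < a⁻¹ := by positivity
  obtain ⟨s0, s1⟩ := phs_mem Θ' true ξ
  have hD := sq_nonneg (Dn χ n ξ)
  by_cases hs : phs Θ' true ξ = 0
  · rw [hs]
    generalize phs Θ true ξ = t
    have hmain : 1 ≤ a * t ^ 2 + (1 - t) ^ 2 + 2 * (e * t ^ 2 + d * (1 - t) ^ 2) := by
      have i1 : 2 * t ≤ a * t ^ 2 + a⁻¹ := by
        have : 0 ≤ a⁻¹ * (a * t - 1) ^ 2 := by positivity
        have e : a⁻¹ * (a * t - 1) ^ 2 = a * t ^ 2 + a⁻¹ - 2 * t := by field_simp; ring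
        linarith
      have i2 : d * (1/2) ≤ e * t ^ 2 + d * (1 - t) ^ 2 := by
        have : d * t ^ 2 ≤ e * t ^ 2 := by gcongr
        nlinarith [mul_nonneg hd0.le (sq_nonneg (2 * t - 1))]
      nlinarith [sq_nonneg t]
    have := mul_le_mul_of_nonneg_right hmain hD
    linarith
  · have hmem : ξ ∈ Θ.Cp := by
      by_contra hcon; exact hs (phs_zero_of_not_mem h hξ hcon)
    have ht : phs Θ true ξ = 1 := Θ.one_on_p ξ hmem hξ
    rw [ht]
    generalize phs Θ' true ξ = s at *
    have i1 : a * s ^ 2 + (1 - s) ^ 2 ≤ a := by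
      have : (1 - s)^2 ≤ a * (1 - s) ^ 2 := le_mul_of_one_le_left (sq_nonneg _) ha1
      have : a * (s^2 + (1 - s)^2) ≤ a * 1 := by gcongr; nlinarith
      linarith
    have := mul_le_mul_of_nonneg_right i1 hD
    have : 0 ≤ e * Dn χ n ξ ^ 2 := by positivity
    linarith

lemma anorm_cmp {χ : ℝ → ℝ} (hχ : ChiOK χ) {Θ Θ' : Polarization} (h : PolLt Θ' Θ) {ε : ℝ} (h0 : 0 < ε) (h1 : ε < 1/2)
    (u : ℝ × ℝ → ℂ) (hu : Integrable u) :
    anorm χ Θ' 1 0 u ≤ anorm χ Θ 1 0 u + 2 * anorm χ Θ (1 - ε) (-ε) u := by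
  rw [anorm_eq hχ _ _ _ u hu, anorm_eq hχ _ _ _ u hu, anorm_eq hχ _ _ _ u hu]
  rw [← ENNReal.pow_le_pow_left_iff (n := 2) (by norm_num)]
  have hF := (FT_cont hu).measurable
  have hsq : ∀ Θ p q, eLpNorm (fun ξ => (bw χ Θ p q ξ : ℂ) * FT u ξ) 2 volume ^ 2 = ∫⁻ ξ, Wt χ Θ p q ξ * ‖FT u ξ‖ₑ ^ 2 := by
    intro Θ p q
    rw [eL2_sq]; congr 1; ext ξ
    have : ‖(bw χ Θ p q ξ : ℂ)‖ₑ = ‖bw χ Θ p q ξ‖ₑ := by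
      rw [← ofReal_norm, ← ofReal_norm, Complex.norm_real]
    rw [enorm_mul, mul_pow, this, bw_enorm_sq hχ]
  set X := eLpNorm (fun ξ => (bw χ Θ 1 0 ξ : ℂ) * FT u ξ) 2 volume with hX
  set Y := eLpNorm (fun ξ => (bw χ Θ (1-ε) (-ε) ξ : ℂ) * FT u ξ) 2 volume with hY
  have hm1 : ∀ p q, Measurable (fun ξ => Wt χ Θ p q ξ * ‖FT u ξ‖ₑ ^ 2) := fun p q => (Wt_meas hχ Θ p q).mul (hF.enorm.pow_const 2)
  calc _ = ∫⁻ ξ, Wt χ Θ' 1 0 ξ * ‖FT u ξ‖ₑ ^ 2 := hsq _ _ _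
    _ ≤ ∫⁻ ξ, (Wt χ Θ 1 0 ξ * ‖FT u ξ‖ₑ ^ 2 + 2 * (Wt χ Θ (1-ε) (-ε) ξ * ‖FT u ξ‖ₑ ^ 2)) := by
        apply lintegral_mono_ae
        have : ∀ᵐ ξ : ℝ × ℝ, ξ ≠ 0 := by
          rw [ae_iff]; simp
        filter_upwards [this] with ξ hξ
        rw [← mul_assoc, ← add_mul]
        gcongr
        exact Wt_cmp h h0 h1 ξ hξ
    _ = X ^ 2 + 2 * Y ^ 2 := by
        rw [lintegral_add_left (hm1 _ _), lintegral_const_mul _ (hm1 _ _), ← hsq, ← hsq]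
    _ ≤ X ^ 2 + 4 * (X * Y) + 4 * Y ^ 2 := by
        gcongr
        · exact le_self_add
        · norm_num
    _ = _ := by ring


lemma FT_bdd {w : ℝ × ℝ → ℂ} (ξ : ℝ × ℝ) : ‖FT w ξ‖ ≤ ∫ x, ‖w x‖ := by
  unfold FT
  refine (norm_integral_le_integral_norm _).trans (le_of_eq ?_)
  congr 1
  ext x
  rw [norm_mul, show Complex.exp (-(2 * Real.pi * (x.1 * ξ.1 + x.2 * ξ.2)) * Complex.I) =
    Complex.exp (((-(2 * Real.pi * (x.1 * ξ.1 + x.2 * ξ.2)) : ℝ) : ℂ) * Complex.I) by push_cast; rfl,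
    Complex.norm_exp_ofReal_mul_I, one_mul]

lemma bw_growth {χ : ℝ → ℝ} (hχ : ChiOK χ) (Θ : Polarization) :
    ∃ L : ℝ, 0 ≤ L ∧ ∀ ξ, bw χ Θ 1 0 ξ ≤ L * (1 + ‖ξ‖) := by
  obtain ⟨L, hL, h, -⟩ := bw_lip hχ Θ
  refine ⟨L + bw χ Θ 1 0 0, add_nonneg hL (bw_nonneg _ _ _ _), fun ξ => ?_⟩
  have h1 := h ξ 0
  have h2 := le_abs_self (bw χ Θ 1 0 ξ - bw χ Θ 1 0 0)
  have h3 := bw_nonneg (χ := χ) Θ 1 0 0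
  rw [sub_zero] at h1
  nlinarith [norm_nonneg ξ, mul_nonneg h3 (norm_nonneg ξ)]

lemma Cc.FT_int {v : ℝ × ℝ → ℂ} (h : Cc 3 v) : Integrable (FT v) := by
  refine h.decay1.mono (FT_cont h.integrable).aestronglyMeasurable (Eventually.of_forall fun ξ => ?_)
  rw [norm_mul, Complex.norm_real, Real.norm_of_nonneg (by positivity)]
  have : (1:ℝ) ≤ (1 + ‖ξ‖) ^ (3/2:ℝ) := Real.one_le_rpow (by linarith [norm_nonneg ξ]) (by norm_num)
  nlinarith [norm_nonneg (FT v ξ)]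

lemma bv_meas {χ : ℝ → ℝ} (hχ : ChiOK χ) (Θ : Polarization) (p q : ℝ) {v : ℝ × ℝ → ℂ} (h : Integrable v) :
    Measurable (fun ξ => (bw χ Θ p q ξ : ℂ) * FT v ξ) :=
  (Complex.measurable_ofReal.comp (bw_meas hχ Θ p q)).mul (FT_cont h).measurable

lemma bv_int {χ : ℝ → ℝ} (hχ : ChiOK χ) (Θ : Polarization) {v : ℝ × ℝ → ℂ} (h : Cc 3 v) :
    Integrable (fun ξ => (bw χ Θ 1 0 ξ : ℂ) * FT v ξ) := by
  obtain ⟨L, hL, hb⟩ := bw_growth hχ Θ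
  refine (h.decay1.const_mul (L:ℂ)).mono (bv_meas hχ Θ 1 0 h.integrable).aestronglyMeasurable
    (Eventually.of_forall fun ξ => ?_)
  rw [norm_mul, norm_mul, norm_mul, Complex.norm_real, Complex.norm_real, Complex.norm_real,
    Real.norm_of_nonneg hL, Real.norm_of_nonneg (bw_nonneg _ _ _ _), Real.norm_of_nonneg (by positivity), ← mul_assoc]
  gcongr
  refine (hb ξ).trans ?_
  gcongr
  conv_lhs => rw [← Real.rpow_one (1 + ‖ξ‖)]
  exact Real.rpow_le_rpow_of_exponent_le (by linarith [norm_nonneg ξ]) (by norm_num)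

lemma bv_memLp {χ : ℝ → ℝ} (hχ : ChiOK χ) (Θ : Polarization) {v : ℝ × ℝ → ℂ} (h : Cc 3 v) :
    MemLp (fun ξ => (bw χ Θ 1 0 ξ : ℂ) * FT v ξ) 2 := by
  obtain ⟨L, hL, hb⟩ := bw_growth hχ Θ
  refine (h.decay2.const_mul (L:ℂ)).mono (bv_meas hχ Θ 1 0 h.integrable).aestronglyMeasurable
    (Eventually.of_forall fun ξ => ?_)
  rw [norm_mul, norm_mul, norm_mul, Complex.norm_real, Complex.norm_real, Complex.norm_real,
    Real.norm_of_nonneg hL, Real.norm_of_nonneg (bw_nonneg _ _ _ _), Real.norm_of_nonneg (by positivity), ← mul_assoc]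
  gcongr
  refine (hb ξ).trans ?_
  gcongr
  exact le_self_pow₀ (by linarith [norm_nonneg ξ]) (by norm_num)

/-- The multiplier applied in physical space. -/
def FF (χ : ℝ → ℝ) (Θ : Polarization) (v : ℝ × ℝ → ℂ) : ℝ × ℝ → ℂ :=
  invFT (fun ξ => (bw χ Θ 1 0 ξ : ℂ) * FT v ξ)

lemma FF_cont {χ : ℝ → ℝ} (hχ : ChiOK χ) (Θ : Polarization) {v : ℝ × ℝ → ℂ} (h : Cc 3 v) :
    Continuous (FF χ Θ v) := invFT_cont (bv_int hχ Θ h)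

lemma FF_norm {χ : ℝ → ℝ} (hχ : ChiOK χ) (Θ : Polarization) {v : ℝ × ℝ → ℂ} (h : Cc 3 v) :
    eLpNorm (FF χ Θ v) 2 volume = anorm χ Θ 1 0 v := by
  rw [anorm_eq hχ Θ 1 0 v h.integrable]
  exact invFT_planch (bv_int hχ Θ h) (bv_memLp hχ Θ h)

/-- commutator remainder -/
def EE (χ : ℝ → ℝ) (Θ : Polarization) (w v : ℝ × ℝ → ℂ) (ξ : ℝ × ℝ) : ℂ :=
  (bw χ Θ 1 0 ξ : ℂ) * FT (fun x => w x * v x) ξ - FT (fun x => w x * FF χ Θ v x) ξ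

lemma EE_eq {χ : ℝ → ℝ} (hχ : ChiOK χ) (Θ : Polarization) {w v : ℝ × ℝ → ℂ} (hw : Cc 3 w) (hv : Cc 3 v) (ξ : ℝ × ℝ) :
    EE χ Θ w v ξ = ∫ ζ, FT w (ξ - ζ) * ((bw χ Θ 1 0 ξ - bw χ Θ 1 0 ζ : ℝ) : ℂ) * FT v ζ := by
  have h1 : FT (fun x => w x * v x) ξ = ∫ ζ, FT w (ξ - ζ) * FT v ζ := by
    rw [← FT_mul_invFT hw.integrable hv.FT_int]
    congr 1
    ext x
    rw [FT_inversion hv.1.continuous hv.integrable hv.FT_int]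
  have h2 : FT (fun x => w x * FF χ Θ v x) ξ = ∫ ζ, FT w (ξ - ζ) * ((bw χ Θ 1 0 ζ : ℂ) * FT v ζ) :=
    FT_mul_invFT hw.integrable (bv_int hχ Θ hv) ξ
  have hc : Continuous fun ζ => FT w (ξ - ζ) := (FT_cont hw.integrable).comp (by fun_prop)
  have i1 : Integrable fun ζ => FT w (ξ - ζ) * FT v ζ :=
    hv.FT_int.bdd_mul hc.aestronglyMeasurable (c := ∫ x, ‖w x‖) (Eventually.of_forall fun ζ => FT_bdd _)
  have i2 : Integrable fun ζ => FT w (ξ - ζ) * ((bw χ Θ 1 0 ζ : ℂ) * FT v ζ) :=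
    (bv_int hχ Θ hv).bdd_mul hc.aestronglyMeasurable (c := ∫ x, ‖w x‖) (Eventually.of_forall fun ζ => FT_bdd _)
  rw [EE, h1, h2, ← integral_const_mul, ← integral_sub (i1.const_mul _) i2]
  congr 1
  ext ζ
  push_cast
  ring

lemma comm {χ : ℝ → ℝ} (hχ : ChiOK χ) {Θ Θ' : Polarization} (h : PolLt Θ' Θ) {ε : ℝ} (h0 : 0 < ε) (h1 : ε < 1/2)
    {w : ℝ × ℝ → ℂ} (hw : Cc 3 w) : ∃ C : ℝ≥0, ∀ v, Cc 3 v →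
      eLpNorm (EE χ Θ' w v) 2 volume ≤ C * anorm χ Θ (1 - ε) (-ε) v := by
  obtain ⟨C, hC, hk⟩ := key hχ h h0 h1
  set K : ℝ × ℝ → ℝ≥0∞ := fun η => ‖(C:ℂ) * ((((1+‖η‖)^(3/2:ℝ) : ℝ):ℂ) * FT w η)‖ₑ with hKd
  have hKfin : ∫⁻ η, K η ≠ ⊤ := ((hw.decay1.const_mul (C:ℂ)).hasFiniteIntegral).ne
  have hKm : Measurable K := by
    have := (FT_cont hw.integrable).measurable
    have h2 : Measurable fun η : ℝ × ℝ => (((1+‖η‖)^(3/2:ℝ) : ℝ):ℂ) := by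
      apply Complex.measurable_ofReal.comp
      exact (measurable_const.add measurable_norm).pow_const _
    exact ((h2.mul this).const_mul _).enorm
  refine ⟨(∫⁻ η, K η).toNNReal, fun v hv => ?_⟩
  rw [ENNReal.coe_toNNReal hKfin, anorm_eq hχ Θ _ _ v hv.integrable]
  have hfm := bv_meas hχ Θ (1 - ε) (-ε) hv.integrable
  rw [← ENNReal.pow_le_pow_left_iff two_ne_zero, mul_pow, eL2_sq, eL2_sq]
  refine le_trans ?_ (young K (fun ζ => ‖(bw χ Θ (1 - ε) (-ε) ζ : ℂ) * FT v ζ‖ₑ) hKm hfm.enorm)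
  gcongr with ξ
  rw [EE_eq hχ Θ' hw hv]
  refine (enorm_integral_le_lintegral_enorm _).trans ?_
  gcongr with ζ
  rw [hKd, ← enorm_mul]
  apply enorm_le_iff_norm_le.2
  simp only [norm_mul, Complex.norm_real]
  rw [Real.norm_of_nonneg hC, Real.norm_of_nonneg (show 0 ≤ (1 + ‖ξ - ζ‖) ^ (3/2:ℝ) by positivity),
    Real.norm_of_nonneg (bw_nonneg _ _ _ _), Real.norm_eq_abs]
  calc _ = ‖FT w (ξ - ζ)‖ * ‖FT v ζ‖ * |bw χ Θ' 1 0 ξ - bw χ Θ' 1 0 ζ| := by ring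
    _ ≤ ‖FT w (ξ - ζ)‖ * ‖FT v ζ‖ * (C * (1 + ‖ξ - ζ‖) ^ (3/2:ℝ) * bw χ Θ (1 - ε) (-ε) ζ) := by
        gcongr; exact hk ξ ζ
    _ = _ := by ring


/-- ℓ² norm of a finite family. -/
def l2 {I : ℕ} (y : Fin I → ℝ≥0∞) : ℝ≥0∞ := (∑ i, y i ^ 2) ^ (1/2:ℝ)

lemma l2_mono {I : ℕ} {y z : Fin I → ℝ≥0∞} (h : ∀ i, y i ≤ z i) : l2 y ≤ l2 z := by
  unfold l2
  gcongr with i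
  exact h i

lemma l2_add {I : ℕ} (y z : Fin I → ℝ≥0∞) : l2 (fun i => y i + z i) ≤ l2 y + l2 z := by
  have := ENNReal.Lp_add_le Finset.univ y z (p := 2) (by norm_num)
  simpa [l2] using this

lemma l2_le_sum {I : ℕ} (y : Fin I → ℝ≥0∞) : l2 y ≤ ∑ i, y i := by
  rw [← sq_half (∑ i, y i)]
  unfold l2
  gcongr
  rw [sq (∑ i, y i), Finset.sum_mul]
  gcongr with i
  rw [sq]
  gcongr
  exact Finset.single_le_sum (f := y) (fun _ _ => zero_le) (Finset.mem_univ i)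

lemma l2_sq {I : ℕ} (y : Fin I → ℝ≥0∞) : l2 y ^ 2 = ∑ i, y i ^ 2 := half_sq _

lemma l2_const {I : ℕ} (c : ℝ≥0∞) (y : Fin I → ℝ≥0∞) : ∑ i, c * y i = c * ∑ i, y i := (Finset.mul_sum _ _ _).symm

lemma wF_int {χ : ℝ → ℝ} (hχ : ChiOK χ) (Θ : Polarization) {w v : ℝ × ℝ → ℂ} (hw : Cc 3 w) (hv : Cc 3 v) :
    Integrable (fun x => w x * FF χ Θ v x) :=
  (hw.1.continuous.mul (FF_cont hχ Θ hv)).integrable_of_hasCompactSupport hw.2.mul_right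

lemma wF_memLp {χ : ℝ → ℝ} (hχ : ChiOK χ) (Θ : Polarization) {w v : ℝ × ℝ → ℂ} (hw : Cc 3 w) (hv : Cc 3 v) :
    MemLp (fun x => w x * FF χ Θ v x) 2 :=
  (hw.1.continuous.mul (FF_cont hχ Θ hv)).memLp_of_hasCompactSupport hw.2.mul_right

lemma wv_Cc {w v : ℝ × ℝ → ℂ} (hw : Cc 3 w) (hv : Cc 3 v) : Cc 3 (fun x => w x * v x) := hv.mul hw.1

lemma EE_meas {χ : ℝ → ℝ} (hχ : ChiOK χ) (Θ : Polarization) {w v : ℝ × ℝ → ℂ} (hw : Cc 3 w) (hv : Cc 3 v) :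
    AEStronglyMeasurable (EE χ Θ w v) volume :=
  ((bv_meas hχ Θ 1 0 (wv_Cc hw hv).integrable).sub (FT_cont (wF_int hχ Θ hw hv)).measurable).aestronglyMeasurable

lemma part1 {χ : ℝ → ℝ} (hχ : ChiOK χ) {Θ Θ' : Polarization} (h : PolLt Θ' Θ) {ε : ℝ} (h0 : 0 < ε) (h1 : ε < 1/2)
    {I : ℕ} (g : Fin I → ℝ × ℝ → ℝ) (hg : ∀ i, Cc 3 (fun x => (g i x : ℂ))) (hg01 : ∀ i x, g i x ∈ Set.Icc (0:ℝ) 1)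
    (hs : ∀ x, ∑ i, g i x ≤ 1) : ∃ C : ℝ≥0, ∀ u, Cc 3 u →
      l2 (fun i => anorm χ Θ' 1 0 fun x => (g i x : ℂ) * u x) ≤ anorm χ Θ 1 0 u + C * anorm χ Θ (1 - ε) (-ε) u := by
  choose C hC using fun i => comm hχ h h0 h1 (hg i)
  refine ⟨2 + ∑ i, C i, fun u hu => ?_⟩
  have hA : ∀ i, (anorm χ Θ' 1 0 fun x => (g i x : ℂ) * u x) ≤
      eLpNorm (fun x => (g i x : ℂ) * FF χ Θ' u x) 2 volume + C i * anorm χ Θ (1 - ε) (-ε) u := by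
    intro i
    rw [anorm_eq hχ Θ' 1 0 _ (wv_Cc (hg i) hu).integrable,
      ← FT_planch (wF_int hχ Θ' (hg i) hu) (wF_memLp hχ Θ' (hg i) hu)]
    have : (fun ξ => (bw χ Θ' 1 0 ξ : ℂ) * FT (fun x => (g i x : ℂ) * u x) ξ) =
        FT (fun x => (g i x : ℂ) * FF χ Θ' u x) + EE χ Θ' (fun x => (g i x : ℂ)) u := by
      ext ξ
      simp [EE]
    rw [this]
    refine (eLpNorm_add_le (FT_cont (wF_int hχ Θ' (hg i) hu)).aestronglyMeasurable
      (EE_meas hχ Θ' (hg i) hu) (by norm_num)).trans ?_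
    gcongr
    exact hC i u hu
  refine (l2_mono hA).trans ((l2_add _ _).trans ?_)
  have hB : l2 (fun i => eLpNorm (fun x => (g i x : ℂ) * FF χ Θ' u x) 2 volume) ≤ anorm χ Θ' 1 0 u := by
    rw [← FF_norm hχ Θ' hu, ← ENNReal.pow_le_pow_left_iff two_ne_zero, l2_sq]
    simp_rw [eL2_sq]
    have hm := (FF_cont hχ Θ' hu)
    rw [← lintegral_finset_sum]
    · gcongr with x
      simp_rw [enorm_mul, mul_pow]
      rw [← Finset.sum_mul]
      conv_rhs => rw [← one_mul (‖FF χ Θ' u x‖ₑ ^ 2)]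
      gcongr
      have : ∀ i, ‖(g i x : ℂ)‖ₑ ^ 2 ≤ ENNReal.ofReal (g i x) := by
        intro i
        rw [← ofReal_norm, Complex.norm_real, Real.norm_of_nonneg (hg01 i x).1, ← ENNReal.ofReal_pow (hg01 i x).1]
        apply ENNReal.ofReal_le_ofReal
        nlinarith [(hg01 i x).1, (hg01 i x).2]
      refine (Finset.sum_le_sum fun i _ => this i).trans ?_
      rw [← ENNReal.ofReal_sum_of_nonneg fun i _ => (hg01 i x).1]
      exact ENNReal.ofReal_le_one.2 (hs x)
    · intro i _
      exact ((((hg i).1.continuous.mul hm).measurable).enorm).pow_const 2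
  have hD := l2_le_sum (fun i => (C i : ℝ≥0∞) * anorm χ Θ (1 - ε) (-ε) u)
  rw [← Finset.sum_mul] at hD
  refine (add_le_add hB hD).trans ?_
  refine (add_le_add_left (anorm_cmp hχ h h0 h1 u hu.integrable) _).trans (le_of_eq ?_)
  push_cast
  ring

lemma exp_mul_int {f : ℝ × ℝ → ℂ} (hf : Integrable f) (ξ : ℝ × ℝ) :
    Integrable fun x : ℝ × ℝ => Complex.exp (-(2 * Real.pi * (x.1 * ξ.1 + x.2 * ξ.2)) * Complex.I) * f x := by
  refine hf.bdd_mul (c := 1) (Continuous.aestronglyMeasurable (by fun_prop)) (Eventually.of_forall fun x => ?_)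
  rw [show Complex.exp (-(2 * Real.pi * (x.1 * ξ.1 + x.2 * ξ.2)) * Complex.I) =
    Complex.exp (((-(2 * Real.pi * (x.1 * ξ.1 + x.2 * ξ.2)) : ℝ) : ℂ) * Complex.I) by push_cast; rfl,
    Complex.norm_exp_ofReal_mul_I]

lemma FT_sum {I : ℕ} {f : Fin I → ℝ × ℝ → ℂ} (hf : ∀ i, Integrable (f i)) (ξ : ℝ × ℝ) :
    FT (fun x => ∑ i, f i x) ξ = ∑ i, FT (f i) ξ := by
  unfold FT
  rw [← integral_finset_sum _ fun i _ => exp_mul_int (hf i) ξ]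
  simp_rw [Finset.mul_sum]

lemma part2 {χ : ℝ → ℝ} (hχ : ChiOK χ) {Θ Θ' : Polarization} (h : PolLt Θ' Θ) {ε : ℝ} (h0 : 0 < ε) (h1 : ε < 1/2)
    {I : ℕ} (w : Fin I → ℝ × ℝ → ℝ) (hw : ∀ i, Cc 3 (fun x => (w i x : ℂ))) (N : ℕ)
    (hs : ∀ x, ∑ i, w i x ^ 2 ≤ (N:ℝ) ^ 2) : ∃ C : ℝ≥0, ∀ (u : ℝ × ℝ → ℂ) (v : Fin I → ℝ × ℝ → ℂ),
      (∀ i, Cc 3 (v i)) → (∀ x, u x = ∑ i, (w i x : ℂ) * v i x) →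
      anorm χ Θ' 1 0 u ≤ N * l2 (fun i => anorm χ Θ 1 0 (v i)) + C * ∑ i, anorm χ Θ (1 - ε) (-ε) (v i) := by
  choose C hC using fun i => comm hχ h h0 h1 (hw i)
  refine ⟨2 * N + ∑ i, C i, fun u v hv hu => ?_⟩
  have hu' : u = fun x => ∑ i, (w i x : ℂ) * v i x := funext hu
  have hI : ∀ i, Integrable fun x => (w i x : ℂ) * v i x := fun i => (wv_Cc (hw i) (hv i)).integrable
  have hI2 : ∀ i, Integrable fun x => (w i x : ℂ) * FF χ Θ' (v i) x := fun i => wF_int hχ Θ' (hw i) (hv i)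
  have hui : Integrable u := by rw [hu']; exact integrable_finset_sum _ fun i _ => hI i
  set P : ℝ × ℝ → ℂ := fun x => ∑ i, (w i x : ℂ) * FF χ Θ' (v i) x with hP
  have hPi : Integrable P := integrable_finset_sum _ fun i _ => hI2 i
  have hP2 : MemLp P 2 := memLp_finset_sum _ fun i _ => wF_memLp hχ Θ' (hw i) (hv i)
  have hdec : (fun ξ => (bw χ Θ' 1 0 ξ : ℂ) * FT u ξ) = FT P + ∑ i, EE χ Θ' (fun x => (w i x : ℂ)) (v i) := by
    ext ξ
    rw [Pi.add_apply, Finset.sum_apply, hP, FT_sum hI2, hu', FT_sum hI, ← Finset.sum_add_distrib, Finset.mul_sum]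
    refine Finset.sum_congr rfl fun i _ => ?_
    simp [EE]
  have hB : eLpNorm P 2 volume ≤ N * l2 (fun i => anorm χ Θ' 1 0 (v i)) := by
    rw [← ENNReal.pow_le_pow_left_iff two_ne_zero, mul_pow, l2_sq]
    simp_rw [← FF_norm hχ Θ' (hv _), eL2_sq]
    have hm : ∀ i, Measurable fun x => ‖FF χ Θ' (v i) x‖ₑ ^ 2 := fun i =>
      ((FF_cont hχ Θ' (hv i)).measurable.enorm).pow_const 2
    rw [← lintegral_finset_sum _ fun i _ => hm i, ← lintegral_const_mul _ (Finset.measurable_sum _ fun i _ => hm i)]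
    gcongr with x
    have e : ∀ z : ℂ, ‖z‖ₑ ^ 2 = ENNReal.ofReal (‖z‖ ^ 2) := fun z => by
      rw [← ofReal_norm, ENNReal.ofReal_pow (norm_nonneg _)]
    have e2 : (N:ℝ≥0∞) ^ 2 = ENNReal.ofReal ((N:ℝ) ^ 2) := by
      rw [ENNReal.ofReal_pow (by positivity), ENNReal.ofReal_natCast]
    simp_rw [e, e2]
    rw [← ENNReal.ofReal_sum_of_nonneg fun i _ => by positivity, ← ENNReal.ofReal_mul (by positivity)]
    apply ENNReal.ofReal_le_ofReal
    calc ‖P x‖ ^ 2 ≤ (∑ i, |w i x| * ‖FF χ Θ' (v i) x‖) ^ 2 := by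
          gcongr
          refine (norm_sum_le _ _).trans (le_of_eq ?_)
          simp
      _ ≤ (∑ i, |w i x| ^ 2) * ∑ i, ‖FF χ Θ' (v i) x‖ ^ 2 := Finset.sum_mul_sq_le_sq_mul_sq _ _ _
      _ ≤ _ := by
          gcongr
          simpa using hs x
  have hE : eLpNorm (∑ i, EE χ Θ' (fun x => (w i x : ℂ)) (v i)) 2 volume ≤
      (∑ i, (C i : ℝ≥0∞)) * ∑ i, anorm χ Θ (1 - ε) (-ε) (v i) := by
    refine (eLpNorm_sum_le (fun i _ => EE_meas hχ Θ' (hw i) (hv i)) (by norm_num)).trans ?_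
    rw [Finset.sum_mul]
    gcongr with i
    refine (hC i _ (hv i)).trans ?_
    gcongr
    exact Finset.single_le_sum (f := fun i => anorm χ Θ (1 - ε) (-ε) (v i)) (fun _ _ => zero_le) (Finset.mem_univ i)
  have hl : l2 (fun i => anorm χ Θ' 1 0 (v i)) ≤ l2 (fun i => anorm χ Θ 1 0 (v i)) + 2 * ∑ i, anorm χ Θ (1 - ε) (-ε) (v i) := by
    refine (l2_mono fun i => anorm_cmp hχ h h0 h1 (v i) (hv i).integrable).trans ((l2_add _ _).trans ?_)
    gcongr
    refine (l2_le_sum _).trans (le_of_eq ?_)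
    rw [Finset.mul_sum]
  rw [anorm_eq hχ Θ' 1 0 u hui, hdec]
  refine (eLpNorm_add_le (FT_cont hPi).aestronglyMeasurable
    (Finset.aestronglyMeasurable_sum _ fun i _ => EE_meas hχ Θ' (hw i) (hv i)) (by norm_num)).trans ?_
  rw [FT_planch hPi hP2]
  calc _ ≤ N * (l2 (fun i => anorm χ Θ 1 0 (v i)) + 2 * ∑ i, anorm χ Θ (1 - ε) (-ε) (v i)) +
      (∑ i, (C i : ℝ≥0∞)) * ∑ i, anorm χ Θ (1 - ε) (-ε) (v i) := by
        gcongr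
        exact hB.trans (by gcongr)
    _ = _ := by push_cast; ring


lemma mult_CS {I : ℕ} (a : Fin I → ℝ) (N : ℕ) (hN : {i : Fin I | a i ≠ 0}.ncard ≤ N) :
    (∑ i, a i) ^ 2 ≤ N * ∑ i, a i ^ 2 := by
  classical
  have e : {i : Fin I | a i ≠ 0}.ncard = (Finset.univ.filter fun i => a i ≠ 0).card := by
    rw [← Set.ncard_coe_finset]; congr 1; ext i; simp
  rw [e] at hN
  have h1 : ∑ i, a i = ∑ i ∈ Finset.univ.filter (fun i => a i ≠ 0), a i := by
    rw [Finset.sum_filter_ne_zero]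
  rw [h1]
  refine sq_sum_le_card_mul_sum_sq.trans ?_
  have h2 : ∑ i ∈ Finset.univ.filter (fun i => a i ≠ 0), a i ^ 2 ≤ ∑ i, a i ^ 2 :=
    Finset.sum_le_sum_of_subset_of_nonneg (Finset.filter_subset _ _) fun i _ _ => sq_nonneg _
  gcongr

lemma weights {I : ℕ} (g : Fin I → ℝ × ℝ → ℝ) (hg : ∀ i, ContDiff ℝ 3 (g i)) (hg01 : ∀ i x, g i x ∈ Set.Icc (0:ℝ) 1)
    (hs : ∀ x, ∑ i, g i x ≤ 1) (N : ℕ) (hN1 : 1 ≤ N)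
    (hN : ∀ x : ℝ × ℝ, {i : Fin I | x ∈ Function.support (g i)}.ncard ≤ N) :
    ∃ w : Fin I → ℝ × ℝ → ℝ, (∀ i, ContDiff ℝ 3 (w i)) ∧ (∀ i, Function.support (w i) ⊆ Function.support (g i)) ∧
      (∀ x, ∑ i, g i x = 1 → ∑ i, w i x * g i x = 1) ∧ ∀ x, ∑ i, w i x ^ 2 ≤ (N:ℝ) ^ 2 := by
  have hCS : ∀ x, (∑ i, g i x) ^ 2 ≤ N * ∑ i, g i x ^ 2 := fun x => mult_CS (fun i => g i x) N (hN x)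
  have hG1 : ∀ x, ∑ i, g i x ^ 2 ≤ 1 := fun x =>
    (Finset.sum_le_sum fun i _ => by nlinarith [(hg01 i x).1, (hg01 i x).2]).trans (hs x)
  have hG0 : ∀ x, 0 ≤ ∑ i, g i x ^ 2 := fun x => Finset.sum_nonneg fun i _ => sq_nonneg _
  rcases eq_or_lt_of_le hN1 with rfl | hN2
  · refine ⟨g, hg, fun i => subset_rfl, fun x hx => ?_, fun x => ?_⟩
    · have := hCS x
      rw [hx] at this
      have e : ∑ i, g i x * g i x = ∑ i, g i x ^ 2 := by simp_rw [sq]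
      rw [e]
      refine le_antisymm (hG1 x) ?_
      simpa using this
    · simpa using hG1 x
  · have hNr : (2:ℝ) ≤ N := by exact_mod_cast hN2
    set c : ℝ := 1 / N - 1 / (N:ℝ) ^ 2 with hc
    have hc0 : 0 < c := by
      have : c = (N - 1) / (N:ℝ) ^ 2 := by rw [hc]; field_simp
      rw [this]; apply div_pos <;> nlinarith
    set G : ℝ × ℝ → ℝ := fun x => ∑ i, g i x ^ 2 with hGd
    set T : ℝ × ℝ → ℝ := fun x => Real.smoothTransition ((G x - 1 / (N:ℝ) ^ 2) / c) with hT
    have hT0 : ∀ x, 0 ≤ T x := fun x => Real.smoothTransition.nonneg _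
    have hT1 : ∀ x, T x ≤ 1 := fun x => Real.smoothTransition.le_one _
    have hTz : ∀ x, G x ≤ 1 / (N:ℝ) ^ 2 → T x = 0 := fun x hx =>
      Real.smoothTransition.zero_of_nonpos (div_nonpos_of_nonpos_of_nonneg (by linarith) hc0.le)
    have hTo : ∀ x, 1 / (N:ℝ) ≤ G x → T x = 1 := fun x hx =>
      Real.smoothTransition.one_of_one_le (by rw [one_le_div hc0]; linarith)
    have hp : 0 < 1 / (N:ℝ) ^ 2 := by positivity
    have hden : ∀ x, 0 < G x + 1 - T x := by
      intro x
      rcases le_or_gt (G x) (1 / (N:ℝ) ^ 2) with hx | hx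
      · rw [hTz x hx]; linarith [hG0 x]
      · linarith [hT1 x]
    have hGc : ContDiff ℝ 3 G := ContDiff.sum fun i _ => (hg i).pow 2
    have hTc : ContDiff ℝ 3 T := Real.smoothTransition.contDiff.comp ((hGc.sub contDiff_const).div_const c)
    refine ⟨fun i x => T x / (G x + 1 - T x) * g i x, fun i => ?_, fun i x hx => ?_, fun x hx => ?_, fun x => ?_⟩
    · exact (hTc.div ((hGc.add contDiff_const).sub hTc) fun x => (hden x).ne').mul (hg i)
    · exact right_ne_zero_of_mul hx
    · have h1 := hCS x
      rw [hx] at h1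
      have h2 : 1 / (N:ℝ) ≤ G x := by
        rw [div_le_iff₀ (by linarith)]
        simp only [hGd]; linarith
      have h3 : 0 < G x := lt_of_lt_of_le (by positivity) h2
      have h4 : ∑ i, T x / (G x + 1 - T x) * g i x * g i x = T x / (G x + 1 - T x) * G x := by
        rw [hGd, Finset.mul_sum]
        exact Finset.sum_congr rfl fun i _ => by ring
      rw [h4, hTo x h2, add_sub_cancel_right, one_div_mul_cancel h3.ne']
    · have h4 : ∑ i, (T x / (G x + 1 - T x) * g i x) ^ 2 = (T x / (G x + 1 - T x)) ^ 2 * G x := by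
        simp only [hGd]
        rw [Finset.mul_sum]
        exact Finset.sum_congr rfl fun i _ => by ring
      rw [h4]
      rcases le_or_gt (G x) (1 / (N:ℝ) ^ 2) with hx | hx
      · rw [hTz x hx]; simp
      · have h3 : 0 < G x := hp.trans hx
        have h5 : T x / (G x + 1 - T x) ≤ 1 / G x := by
          rw [div_le_div_iff₀ (hden x) h3]
          nlinarith [hT1 x, mul_nonneg (sub_nonneg.2 (hT1 x)) h3.le]
        have h6 : 0 ≤ T x / (G x + 1 - T x) := div_nonneg (hT0 x) (hden x).le
        calc _ ≤ (1 / G x) ^ 2 * G x := by gcongr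
          _ = 1 / G x := by field_simp
          _ ≤ 1 / (1 / (N:ℝ) ^ 2) := by gcongr
          _ = _ := by simp

lemma Q_compact {η δ : ℝ} {s : Set (ℝ × ℝ)} (h : s ⊆ Qset η δ) :
    ∃ K, IsCompact K ∧ s ⊆ K :=
  ⟨Set.Icc (-(2*η)) (2*η) ×ˢ Set.Icc 0 (3*δ), isCompact_Icc.prod isCompact_Icc,
    h.trans (Set.prod_mono Set.Ioo_subset_Icc_self Set.Ioo_subset_Icc_self)⟩

lemma R_sub_Q {η δ : ℝ} (hη : 0 < η) (hδ : 0 < δ) : Rset η δ ⊆ Qset η δ := by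
  apply Set.prod_mono <;> apply Set.Ioo_subset_Ioo <;> linarith

lemma Cc_of {η δ : ℝ} {f : ℝ × ℝ → ℂ} (hf : ContDiff ℝ 3 f) (h : Function.support f ⊆ Qset η δ) : Cc 3 f := by
  obtain ⟨K, hK, hs⟩ := Q_compact h
  exact ⟨hf, HasCompactSupport.of_support_subset_isCompact hK hs⟩

lemma Cc_ofReal {η δ : ℝ} {f : ℝ × ℝ → ℝ} (hf : ContDiff ℝ 3 f) (h : Function.support f ⊆ Qset η δ) :
    Cc 3 (fun x => (f x : ℂ)) := by
  refine Cc_of (Complex.ofRealCLM.contDiff.comp hf) (Set.Subset.trans (fun x hx => ?_) h)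
  intro h0
  apply hx
  simp [h0]

/-- Lemma 2.3. For `C^r` functions `g_i` supported in `Q` with
`∑ g_i ≤ 1` on `Q` and polarizations `Θ' < Θ`:
`(∑ ‖g_i u‖²_{Θ'})^{1/2} ≤ C₀‖u‖_Θ + C|u|_Θ`, with `C₀` independent of the family;
and if moreover `∑ g_i ≡ 1` on `R`, then
`‖u‖_{Θ'} ≤ ν(∑ ‖g_i u‖²_Θ)^{1/2} + C ∑ |g_i u|_Θ` where `ν` is the intersection
multiplicity of the supports. -/
theorem statement8 (r : ℕ) (hr : 3 ≤ r) (η δ ε : ℝ) (hη : 0 < η) (hδ : 0 < δ)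
    (hε₁ : 0 < ε) (hε₂ : ε < 1 / 2) (χ : ℝ → ℝ) (hχ : ChiOK χ) :
    ∃ C₀ : ℝ≥0, ∀ (Θ Θ' : Polarization), PolLt Θ' Θ →
      ∀ (I : ℕ) (g : Fin I → (ℝ × ℝ → ℝ)),
        (∀ i, ContDiff ℝ r (g i) ∧ (∀ x, g i x ∈ Set.Icc (0 : ℝ) 1) ∧
          Function.support (g i) ⊆ Qset η δ) →
        (∀ x ∈ Qset η δ, ∑ i, g i x ≤ 1) →
        ∃ C : ℝ≥0,
          (∀ u : ℝ × ℝ → ℂ, CrSupp r η δ u →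
            (∑ i, (anorm χ Θ' 1 0 fun x => (g i x : ℂ) * u x) ^ 2) ^ (1 / 2 : ℝ) ≤
              C₀ * anorm χ Θ 1 0 u + C * anorm χ Θ (1 - ε) (-ε) u) ∧
          ((∀ x ∈ Rset η δ, ∑ i, g i x = 1) →
            ∀ ν : ℕ,
              (∀ x : ℝ × ℝ,
                {i : Fin I | x ∈ Function.support (g i)}.ncard ≤ ν) →
              ∀ u : ℝ × ℝ → ℂ, CrSupp r η δ u →
                anorm χ Θ' 1 0 u ≤
                  (ν : ℝ≥0∞) *
                      (∑ i, (anorm χ Θ 1 0 fun x => (g i x : ℂ) * u x) ^ 2) ^ (1 / 2 : ℝ) +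
                    C * ∑ i, anorm χ Θ (1 - ε) (-ε) fun x => (g i x : ℂ) * u x) := by
  refine ⟨1, fun Θ Θ' h I g hg hsum => ?_⟩
  have hr' : ((3:ℕ) : WithTop ℕ∞) ≤ (r : WithTop ℕ∞) := by exact_mod_cast hr
  have hg3 : ∀ i, ContDiff ℝ 3 (g i) := fun i => (hg i).1.of_le hr'
  have hgC : ∀ i, Cc 3 (fun x => (g i x : ℂ)) := fun i => Cc_ofReal (hg3 i) (hg i).2.2
  have hg01 : ∀ i x, g i x ∈ Set.Icc (0:ℝ) 1 := fun i => (hg i).2.1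
  have hs : ∀ x, ∑ i, g i x ≤ 1 := by
    intro x
    by_cases hx : x ∈ Qset η δ
    · exact hsum x hx
    · rw [Finset.sum_eq_zero fun i _ => ?_]
      · norm_num
      · by_contra hne
        exact hx ((hg i).2.2 hne)
  have huC : ∀ u, CrSupp r η δ u → Cc 3 u := fun u hu =>
    Cc_of (hu.1.of_le hr') (hu.2.trans (R_sub_Q hη hδ))
  obtain ⟨C1, hC1⟩ := part1 hχ h hε₁ hε₂ g hgC hg01 hs
  by_cases hone : ∀ x ∈ Rset η δ, ∑ i, g i x = 1
  swap
  · refine ⟨C1, fun u hu => ?_, fun h' => absurd h' hone⟩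
    simpa [l2] using hC1 u (huC u hu)
  have hex : ∃ N : ℕ, ∀ x : ℝ × ℝ, {i : Fin I | x ∈ Function.support (g i)}.ncard ≤ N :=
    ⟨I, fun x => (Set.ncard_le_card _).trans (by simp)⟩
  classical
  set N := Nat.find hex with hNd
  have hN := Nat.find_spec hex
  have hN1 : 1 ≤ N := by
    by_contra hlt
    have hN0 : N = 0 := by omega
    have hx : ((0:ℝ), (3/2) * δ) ∈ Rset η δ := by
      refine ⟨⟨?_, ?_⟩, ⟨?_, ?_⟩⟩ <;> simp <;> linarith
    have h1 := hone _ hx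
    have h2 := mult_CS (fun i => g i ((0:ℝ), (3/2) * δ)) N (hN _)
    rw [h1, hN0] at h2
    norm_num at h2
  obtain ⟨w, hw3, hws, hwg, hwN⟩ := weights g hg3 hg01 hs N hN1 hN
  obtain ⟨C2, hC2⟩ := part2 hχ h hε₁ hε₂ w (fun i => Cc_ofReal (hw3 i) ((hws i).trans (hg i).2.2)) N hwN
  refine ⟨C1 + C2, fun u hu => ?_, fun _ ν hν u hu => ?_⟩
  · have := hC1 u (huC u hu)
    rw [ENNReal.coe_one, one_mul]
    refine this.trans ?_
    gcongr
    simp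
  · have hNν : N ≤ ν := Nat.find_min' hex hν
    have := hC2 u (fun i x => (g i x : ℂ) * u x) (fun i => wv_Cc (hgC i) (huC u hu)) (fun x => ?_)
    · refine this.trans ?_
      unfold l2
      gcongr
      simp
    · by_cases hx : x ∈ Rset η δ
      · have h1 := hwg x (hone x hx)
        have h2 : ∑ i, (w i x : ℂ) * ((g i x : ℂ) * u x) = ((∑ i, w i x * g i x : ℝ) : ℂ) * u x := by
          push_cast
          rw [Finset.sum_mul]
          exact Finset.sum_congr rfl fun i _ => by ring
        rw [h2, h1]
        simp
      · have : u x = 0 := by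
          by_contra hne
          exact hx (hu.2 hne)
        simp [this]

end AngleMult
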